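/- For every k ∈ ℕ there exist constants K, K′ ∈ (0,1] such that the following holds. Let R be a commutative ring, let X be a pure d-dimensional finite simplicial complex with d ≥ k+2, regarded as a d-poset, let w be a proper weight function on X, fix an R-orientation on X, let 𝓕 be an R-sheaf on X, and let ε ∈ (0,1]. Assume: (1a) cbe_{k−dim u−1}(X_u, w_u, 𝓕_u) ≥ ε for every face u with 0 ≤ dim u ≤ k; (1b) cbe_{k−dim u}(X_u, w_u, 𝓕_u) ≥ ε for every face u with 0 ≤ dim u ≤ k+1; (2) for every face u with −1 ≤ dim u ≤ k, the underlying weighted graph ugr(X_u, w_u) is a ((Kε)^{2^{k−dim u}}, 1)-skeleton expander. Then ‖d_k f‖_w ≥ K′·(Kε)^{2^{k+2}−1}·dist_w(f, Z^k(X,𝓕)) for every f ∈ C^k(X,𝓕), and ‖f‖_w ≥ K′·(Kε)^{2^{k+1}−1} for every f ∈ Z^k(X,𝓕) not lying in B^k(X,𝓕). -/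

import Mathlib

open scoped Classical

noncomputable section

namespace FK

variable {V : Type*} [Fintype V] [PartialOrder V]

/-- The set of faces of dimension `i`. -/
def faces (dim : V → ℤ) (i : ℤ) : Finset V :=
  Finset.univ.filter fun x => dim x = i

/-- The set of faces of dimension `i` lying above `z`. -/
def facesAbove (dim : V → ℤ) (i : ℤ) (z : V) : Finset V :=
  Finset.univ.filter fun x => dim x = i ∧ z ≤ x

/-- The set of faces of dimension `i` lying below `y`. -/
def facesBelow (dim : V → ℤ) (i : ℤ) (y : V) : Finset V :=
  Finset.univ.filter fun x => dim x = i ∧ x ≤ y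

/-- The set of faces of dimension `j` lying between `x` and `z`. -/
def facesBetween (dim : V → ℤ) (j : ℤ) (x z : V) : Finset V :=
  Finset.univ.filter fun y => dim y = j ∧ x ≤ y ∧ y ≤ z

/-- Total weight of a finite set of faces. -/
def wsum (w : V → ℝ) (A : Finset V) : ℝ := ∑ x ∈ A, w x

/-- `(V, dim)` is a `d`-poset with least face `bot` (of dimension `-1`). -/
structure IsDPoset (dim : V → ℤ) (d : ℤ) (bot : V) : Prop where
  dim_strictMono : ∀ ⦃x y : V⦄, x < y → dim x < dim y
  dim_covBy : ∀ ⦃x y : V⦄, x ⋖ y → dim y = dim x + 1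
  bot_le : ∀ x : V, bot ≤ x
  dim_bot : dim bot = -1
  pure : ∀ x : V, ∃ y : V, x ≤ y ∧ dim y = d

/-- Graded poset axioms. -/
structure IsGraded (dim : V → ℤ) : Prop where
  dim_strictMono : ∀ ⦃x y : V⦄, x < y → dim x < dim y
  dim_covBy : ∀ ⦃x y : V⦄, x ⋖ y → dim y = dim x + 1

/-- `w` is a proper weight function on the `d`-poset `(V, dim)`. -/
structure IsProperWeight (dim : V → ℤ) (d : ℤ) (w : V → ℝ) : Prop where
  pos : ∀ x : V, 0 < w x
  total : wsum w (faces dim d) = 1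
  eq : ∀ x : V, w x = ∑ y ∈ facesAbove dim d x, w y / ((facesBelow dim (dim x) y).card : ℝ)

/-- The weight function induced on the link of `z`. -/
def linkWeight (dim : V → ℤ) (d : ℤ) (w : V → ℝ) (z x : V) : ℝ :=
  (wsum w (facesAbove dim d z))⁻¹ *
    ∑ y ∈ facesAbove dim d x, w y / ((facesBetween dim (dim x) z y).card : ℝ)

/-- An `R`-orientation on the graded poset `(V, dim)`. -/
structure IsOrientation (R : Type*) [CommRing R] (dim : V → ℤ) (sgn : V → V → R) : Prop where
  isUnit : ∀ ⦃x y : V⦄, x ⋖ y → IsUnit (sgn y x)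
  sum_eq_zero : ∀ ⦃x z : V⦄, x ≤ z → dim z = dim x + 2 →
    ∑ y ∈ Finset.univ.filter (fun y => x < y ∧ y < z), sgn z y * sgn y x = 0

/-- The restriction maps of a sheaf compose. -/
structure IsSheafRes (R : Type*) [CommRing R] (F : V → Type*)
    [∀ x, AddCommGroup (F x)] [∀ x, Module R (F x)]
    (res : ∀ x y : V, x ≤ y → (F x →ₗ[R] F y)) : Prop where
  refl : ∀ x : V, res x x le_rfl = LinearMap.id
  trans : ∀ ⦃x y z : V⦄ (hxy : x ≤ y) (hyz : y ≤ z),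
    (res y z hyz).comp (res x y hxy) = res x z (hxy.trans hyz)

/-- `i`-cochains with coefficients in the sheaf `F`. -/
abbrev Cochain (dim : V → ℤ) (F : V → Type*) (i : ℤ) : Type _ :=
  ∀ x : {x : V // dim x = i}, F x.1

/-- Cochains on the link of `u`, indexed by the ambient dimension `i`
(i.e. link-dimension `i - dim u - 1`). -/
abbrev LCochain (dim : V → ℤ) (F : V → Type*) (u : V) (i : ℤ) : Type _ :=
  ∀ x : {x : V // dim x = i ∧ u ≤ x}, F x.1

section Sheaf

variable {R : Type*} [CommRing R] (dim : V → ℤ) (F : V → Type*)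
  [∀ x, AddCommGroup (F x)] [∀ x, Module R (F x)]
  (sgn : V → V → R) (res : ∀ x y : V, x ≤ y → (F x →ₗ[R] F y))
  (w : V → ℝ) (d : ℤ)

/-- The coboundary map, from dimension `i` to dimension `j` (intended: `j = i + 1`). -/
def coboundary (i j : ℤ) (f : Cochain dim F i) : Cochain dim F j := fun y =>
  ∑ x : {x : V // dim x = i},
    if h : x.1 ≤ y.1 then sgn y.1 x.1 • res x.1 y.1 h (f x) else 0

/-- The coboundary map on the link of `u`. -/
def lcoboundary (u : V) (i j : ℤ) (f : LCochain dim F u i) : LCochain dim F u j := fun y =>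
  ∑ x : {x : V // dim x = i ∧ u ≤ x},
    if h : x.1 ≤ y.1 then sgn y.1 x.1 • res x.1 y.1 h (f x) else 0

/-- Weighted Hamming norm of a cochain. -/
def cnorm {i : ℤ} (f : Cochain dim F i) : ℝ :=
  ∑ x : {x : V // dim x = i}, if f x ≠ 0 then w x.1 else 0

/-- Norm of a cochain on the link of `u`, w.r.t. the weight induced on the link. -/
def lnorm (u : V) {i : ℤ} (f : LCochain dim F u i) : ℝ :=
  ∑ x : {x : V // dim x = i ∧ u ≤ x}, if f x ≠ 0 then linkWeight dim d w u x.1 else 0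

/-- `i`-cocycles. -/
def cocycles (i : ℤ) : Set (Cochain dim F i) :=
  {f | coboundary dim F sgn res i (i + 1) f = 0}

/-- `i`-coboundaries. -/
def coboundariesSet (i : ℤ) : Set (Cochain dim F i) :=
  {f | ∃ g : Cochain dim F (i - 1), coboundary dim F sgn res (i - 1) i g = f}

/-- Weighted Hamming distance from a cochain to a set of cochains. -/
def distTo {i : ℤ} (f : Cochain dim F i) (S : Set (Cochain dim F i)) : ℝ :=
  sInf ((fun g => cnorm dim F w (f - g)) '' S)

/-- Coboundaries on the link of `u`, at ambient dimension `i`. -/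
def lcoboundariesSet (u : V) (i : ℤ) : Set (LCochain dim F u i) :=
  {f | ∃ g : LCochain dim F u (i - 1), lcoboundary dim F sgn res u (i - 1) i g = f}

/-- `cbe_{i - dim u - 1}(X_u, w_u, F_u) ≥ ε`, expressed at ambient dimension `i`. -/
def LinkCbeGe (u : V) (i : ℤ) (ε : ℝ) : Prop :=
  ∀ f : LCochain dim F u i,
    ε * sInf ((fun g => lnorm dim F w d u (f - g)) '' lcoboundariesSet dim F sgn res u i)
      ≤ lnorm dim F w d u (lcoboundary dim F sgn res u i (i + 1) f)

/-- Extension of a link cochain by zero. -/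
def extendByZero (u : V) {i : ℤ} (b : LCochain dim F u i) : Cochain dim F i := fun x =>
  if h : u ≤ x.1 then b ⟨x.1, x.2, h⟩ else 0

/-- `f` is mock `q`-locally minimal at `u`. -/
def MockMinAt (q : ℝ) (m : ℤ) (f : Cochain dim F m) (u : V) : Prop :=
  ∀ g : LCochain dim F u (m - 1),
    cnorm dim F w f ≤
      cnorm dim F w (f + extendByZero dim F u (lcoboundary dim F sgn res u (m - 1) m g)) +
        q * w u

/-- `f` is mock `q`-locally minimal. -/
def MockMin (q : ℝ) (m : ℤ) (f : Cochain dim F m) : Prop :=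
  ∀ u : V, 0 ≤ dim u → dim u ≤ m → MockMinAt dim F sgn res w q m f u

end Sheaf

/-- `ugr(X_u, w_u)` is an `(α, β)`-skeleton expander. -/
def LinkUgrSkeletonExpander (dim : V → ℤ) (d : ℤ) (w : V → ℝ) (u : V) (α β : ℝ) : Prop :=
  ∀ A ⊆ facesAbove dim (dim u + 1) u,
    wsum (linkWeight dim d w u)
        ((facesAbove dim (dim u + 2) u).filter fun e =>
          ∃ x ∈ A, ∃ y ∈ A, x ≠ y ∧ x ≤ e ∧ y ≤ e)
      ≤ α * wsum (linkWeight dim d w u) A + β * wsum (linkWeight dim d w u) A ^ 2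

/-- `ugr(X, w)` is an `(α, β)`-skeleton expander. -/
def UgrSkeletonExpander (dim : V → ℤ) (w : V → ℝ) (α β : ℝ) : Prop :=
  ∀ A ⊆ faces dim 0,
    wsum w ((faces dim 1).filter fun e => ∃ x ∈ A, ∃ y ∈ A, x ≠ y ∧ x ≤ e ∧ y ≤ e)
      ≤ α * wsum w A + β * wsum w A ^ 2

/-- `NI^{1,1,2}(X, w)` is an `(α, β)`-skeleton expander. -/
def NI112SkeletonExpander (dim : V → ℤ) (w : V → ℝ) (bot : V) (α β : ℝ) : Prop :=
  ∀ A ⊆ faces dim 1,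
    wsum w ((faces dim 2).filter fun z =>
        ∃ x ∈ A, ∃ y ∈ A, x ≠ y ∧ x ≤ z ∧ y ≤ z ∧ ∀ t : V, t ≤ x → t ≤ y → t = bot)
      ≤ α * wsum w A + β * wsum w A ^ 2

/-- Pairs of an `i`-face and a `k`-face that are incident. -/
def incidentPairs (dim : V → ℤ) (i k : ℤ) : Finset (V × V) :=
  Finset.univ.filter fun p => dim p.1 = i ∧ dim p.2 = k ∧ p.1 ≤ p.2

/-- `F^max_{i,j,k}(X)`. -/
def Fmax (dim : V → ℤ) (i j k : ℤ) : ℕ :=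
  (incidentPairs dim i k).sup fun p => (facesBetween dim j p.1 p.2).card

/-- `F^min_{i,j,k}(X)`. -/
def Fmin (dim : V → ℤ) (i j k : ℤ) : ℕ :=
  if h : (incidentPairs dim i k).Nonempty then
    ((incidentPairs dim i k).image fun p => (facesBetween dim j p.1 p.2).card).min'
      (h.image _)
  else 0

end FK

namespace FK

/-- The poset of faces of the simplicial complex `Kc`. -/
abbrev SC {ι : Type} (Kc : Finset (Finset ι)) : Type := {s : Finset ι // s ∈ Kc}

/-- The dimension of a simplicial face. -/
def sdim {ι : Type} {Kc : Finset (Finset ι)} (s : SC Kc) : ℤ := (s.1.card : ℤ) - 1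

end FK

namespace FK

section Gen
variable {V : Type*} [Fintype V] [PartialOrder V]

lemma mem_facesBetween {dim : V → ℤ} {i : ℤ} {z y x : V} :
    x ∈ facesBetween dim i z y ↔ dim x = i ∧ z ≤ x ∧ x ≤ y := by
  simp [facesBetween]

lemma mem_facesAbove {dim : V → ℤ} {i : ℤ} {z x : V} :
    x ∈ facesAbove dim i z ↔ dim x = i ∧ z ≤ x := by
  simp [facesAbove]

lemma mem_facesBelow {dim : V → ℤ} {i : ℤ} {y x : V} :
    x ∈ facesBelow dim i y ↔ dim x = i ∧ x ≤ y := by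
  simp [facesBelow]

end Gen

section Aux

variable {ι : Type} {Kc : Finset (Finset ι)}

/-- Number of vertices of a face. -/
def fc (x : SC Kc) : ℕ := x.1.card

lemma sdim_eq (x : SC Kc) : sdim x = (fc x : ℤ) - 1 := rfl

lemma fc_mono {x y : SC Kc} (h : x ≤ y) : fc x ≤ fc y := Finset.card_le_card h

lemma eq_of_le_fc {x y : SC Kc} (h : x ≤ y) (h2 : fc y ≤ fc x) : x = y :=
  Subtype.ext (Finset.eq_of_subset_of_card_le h h2)

lemma mem_between {i : ℤ} {z y x : SC Kc} :
    x ∈ facesBetween sdim i z y ↔ (fc x : ℤ) - 1 = i ∧ z ≤ x ∧ x ≤ y := by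
  rw [mem_facesBetween, sdim_eq]

lemma mem_above {i : ℤ} {z x : SC Kc} :
    x ∈ facesAbove sdim i z ↔ (fc x : ℤ) - 1 = i ∧ z ≤ x := by
  rw [mem_facesAbove, sdim_eq]

/-- The faces with `n` vertices above `z`. -/
def up (n : ℕ) (z : SC Kc) : Finset (SC Kc) :=
  Finset.univ.filter fun x => fc x = n ∧ z ≤ x

lemma mem_up {n : ℕ} {z x : SC Kc} : x ∈ up n z ↔ fc x = n ∧ z ≤ x := by
  simp [up]

lemma facesAbove_eq {i : ℤ} {n : ℕ} (h : i = (n : ℤ) - 1) (z : SC Kc) :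
    facesAbove sdim i z = up n z := by
  ext x
  simp only [mem_above, mem_up]
  constructor <;> rintro ⟨h1, h2⟩ <;> exact ⟨by omega, h2⟩

lemma card_between (hdown : ∀ s ∈ Kc, ∀ t, t ⊆ s → t ∈ Kc) {z y : SC Kc} (hzy : z ≤ y)
    {n : ℕ} (hn : fc z ≤ n) {i : ℤ} (hi : i = (n : ℤ) - 1) :
    (facesBetween sdim i z y).card = (fc y - fc z).choose (n - fc z) := by
  have e : (y.1 \ z.1).card = fc y - fc z := Finset.card_sdiff_of_subset hzy
  rw [← e, ← Finset.card_powersetCard]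
  refine Finset.card_bij (fun x _ => x.1 \ z.1) ?_ ?_ ?_
  · intro x hx
    simp only [mem_between] at hx
    obtain ⟨h1, h2, h3⟩ := hx
    rw [Finset.mem_powersetCard]
    refine ⟨Finset.sdiff_subset_sdiff h3 le_rfl, ?_⟩
    rw [Finset.card_sdiff_of_subset h2]
    change fc x - fc z = _
    omega
  · intro x hx x' hx' h
    simp only [mem_between] at hx hx'
    apply Subtype.ext
    have h2 : z.1 ⊆ x.1 := hx.2.1
    have h2' : z.1 ⊆ x'.1 := hx'.2.1
    rw [← Finset.sdiff_union_of_subset h2, ← Finset.sdiff_union_of_subset h2']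
    rw [h]
  · intro s hs
    rw [Finset.mem_powersetCard] at hs
    have hsub : s ∪ z.1 ⊆ y.1 :=
      Finset.union_subset (hs.1.trans Finset.sdiff_subset) hzy
    have hd : Disjoint s z.1 := Finset.disjoint_of_subset_left hs.1 Finset.sdiff_disjoint
    refine ⟨⟨s ∪ z.1, hdown _ y.2 _ hsub⟩, ?_, ?_⟩
    · simp only [mem_between]
      refine ⟨?_, ?_, hsub⟩
      · have : fc (⟨s ∪ z.1, hdown _ y.2 _ hsub⟩ : SC Kc) = s.card + fc z :=
          Finset.card_union_of_disjoint hd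
        rw [this]; omega
      · exact Finset.subset_union_right
    · simp only
      rw [Finset.union_sdiff_right]
      exact Finset.sdiff_eq_self_of_disjoint hd

/-- Total top-dimensional weight above a face. -/
def topw (w : SC Kc → ℝ) (D : ℕ) (x : SC Kc) : ℝ := ∑ y ∈ up D x, w y

section
variable {D : ℕ} {d : ℤ} {w : SC Kc → ℝ}

lemma fc_le
    (hD : d = (D : ℤ) - 1)
    (hpure : ∀ s ∈ Kc, ∃ t ∈ Kc, s ⊆ t ∧ (t.card : ℤ) - 1 = d)
    (x : SC Kc) : fc x ≤ D := by
  obtain ⟨t, ht, h1, h2⟩ := hpure x.1 x.2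
  have := Finset.card_le_card h1
  change fc x ≤ _ at this
  omega

lemma topw_eq
    (hempty : ∅ ∈ Kc)
    (hdown : ∀ s ∈ Kc, ∀ t, t ⊆ s → t ∈ Kc)
    (hD : d = (D : ℤ) - 1)
    (hw : IsProperWeight (sdim (Kc := Kc)) d w)
    (x : SC Kc) (hx : fc x ≤ D) : topw w D x = w x * (D.choose (fc x) : ℝ) := by
  have hpos : (0 : ℝ) < (D.choose (fc x) : ℝ) := by exact_mod_cast Nat.choose_pos hx
  rw [hw.eq x, facesAbove_eq hD, Finset.sum_mul]
  refine Finset.sum_congr rfl fun y hy => ?_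
  rw [mem_up] at hy
  have hb : (⟨∅, hempty⟩ : SC Kc) ≤ y := Finset.empty_subset _
  have h0 : fc (⟨∅, hempty⟩ : SC Kc) = 0 := Finset.card_empty
  have : (facesBelow sdim (sdim x) y).card = D.choose (fc x) := by
    have h := card_between hdown hb (n := fc x) (by omega) (i := sdim x) (sdim_eq x)
    rw [h0, hy.1] at h
    simp only [Nat.sub_zero] at h
    rw [← h]
    congr 1
    ext a
    simp only [mem_facesBelow, mem_facesBetween]
    constructor
    · rintro ⟨h1, h2⟩; exact ⟨h1, Finset.empty_subset _, h2⟩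
    · rintro ⟨h1, _, h2⟩; exact ⟨h1, h2⟩
  rw [this]
  field_simp

lemma linkWeight_eq
    (hempty : ∅ ∈ Kc)
    (hdown : ∀ s ∈ Kc, ∀ t, t ⊆ s → t ∈ Kc)
    (hD : d = (D : ℤ) - 1)
    (hpure : ∀ s ∈ Kc, ∃ t ∈ Kc, s ⊆ t ∧ (t.card : ℤ) - 1 = d)
    (hw : IsProperWeight (sdim (Kc := Kc)) d w)
    {u x : SC Kc} (h : u ≤ x) :
    linkWeight sdim d w u x = w x / (((fc x).choose (fc u) : ℝ) * w u) := by
  have hxD := fc_le hD hpure x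
  have hux := fc_mono h
  have e1 : wsum w (facesAbove sdim d u) = w u * (D.choose (fc u) : ℝ) := by
    rw [facesAbove_eq hD, ← topw_eq hempty hdown hD hw u (by omega)]; rfl
  have e2 : ∑ y ∈ facesAbove sdim d x, w y / ((facesBetween sdim (sdim x) u y).card : ℝ)
      = w x * (D.choose (fc x) : ℝ) / ((D - fc u).choose (fc x - fc u) : ℝ) := by
    rw [← topw_eq hempty hdown hD hw x hxD, topw, Finset.sum_div, facesAbove_eq hD]
    refine Finset.sum_congr rfl fun y hy => ?_
    rw [mem_up] at hy
    rw [card_between hdown (h.trans hy.2) hux (sdim_eq x), hy.1]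
  rw [linkWeight, e1, e2]
  have p1 := hw.pos u
  have p2 : (0 : ℝ) < (D.choose (fc u) : ℝ) := by exact_mod_cast Nat.choose_pos (by omega)
  have p3 : (0 : ℝ) < ((D - fc u).choose (fc x - fc u) : ℝ) := by
    exact_mod_cast Nat.choose_pos (by omega)
  have p4 : (0 : ℝ) < ((fc x).choose (fc u) : ℝ) := by exact_mod_cast Nat.choose_pos hux
  have key : (D.choose (fc x) : ℝ) * ((fc x).choose (fc u) : ℝ)
      = (D.choose (fc u) : ℝ) * ((D - fc u).choose (fc x - fc u) : ℝ) := by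
    exact_mod_cast Nat.choose_mul hux
  field_simp
  linear_combination (w x) * key

lemma sum_up
    (hempty : ∅ ∈ Kc)
    (hdown : ∀ s ∈ Kc, ∀ t, t ⊆ s → t ∈ Kc)
    (hD : d = (D : ℤ) - 1)
    (hw : IsProperWeight (sdim (Kc := Kc)) d w)
    (z : SC Kc) {n : ℕ} (hz : fc z ≤ n) (hn : n ≤ D) :
    ∑ x ∈ up n z, w x = (n.choose (fc z) : ℝ) * w z := by
  have p2 : (0 : ℝ) < (D.choose n : ℝ) := by exact_mod_cast Nat.choose_pos hn
  have e : ∑ x ∈ up n z, topw w D x = ((D - fc z).choose (n - fc z) : ℝ) * topw w D z := by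
    unfold topw
    rw [Finset.sum_comm' (t' := up D z) (s' := fun y => facesBetween sdim ((n : ℤ) - 1) z y)]
    · rw [Finset.mul_sum]
      refine Finset.sum_congr rfl fun y hy => ?_
      rw [mem_up] at hy
      rw [Finset.sum_const, card_between hdown hy.2 hz rfl, hy.1, nsmul_eq_mul]
    · intro x y
      simp only [mem_up, mem_between]
      constructor
      · rintro ⟨⟨h1, h2⟩, h3, h4⟩
        exact ⟨⟨by omega, h2, h4⟩, h3, h2.trans h4⟩
      · rintro ⟨⟨h1, h2, h4⟩, h3, _⟩
        exact ⟨⟨by omega, h2⟩, h3, h4⟩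
  have e' : ∑ x ∈ up n z, topw w D x = (∑ x ∈ up n z, w x) * (D.choose n : ℝ) := by
    rw [Finset.sum_mul]
    refine Finset.sum_congr rfl fun y hy => ?_
    rw [mem_up] at hy
    rw [topw_eq hempty hdown hD hw y (by omega), hy.1]
  rw [topw_eq hempty hdown hD hw z (by omega)] at e
  have key : (D.choose n : ℝ) * (n.choose (fc z) : ℝ)
      = (D.choose (fc z) : ℝ) * ((D - fc z).choose (n - fc z) : ℝ) := by
    exact_mod_cast Nat.choose_mul hz
  apply mul_right_cancel₀ p2.ne'
  rw [← e', e]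
  linear_combination (- w z) * key

lemma w_bot
    (hempty : ∅ ∈ Kc)
    (hdown : ∀ s ∈ Kc, ∀ t, t ⊆ s → t ∈ Kc)
    (hD : d = (D : ℤ) - 1)
    (hw : IsProperWeight (sdim (Kc := Kc)) d w)
    : w ⟨∅, hempty⟩ = 1 := by
  have h0 : fc (⟨∅, hempty⟩ : SC Kc) = 0 := Finset.card_empty
  have h := topw_eq hempty hdown hD hw ⟨∅, hempty⟩ (by omega)
  rw [h0] at h
  have h2 := hw.total
  have : faces (sdim (Kc := Kc)) d = up D ⟨∅, hempty⟩ := by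
    rw [← facesAbove_eq hD]
    ext a
    simp only [faces, mem_facesAbove, Finset.mem_filter, Finset.mem_univ, true_and]
    exact ⟨fun h => ⟨h, Finset.empty_subset _⟩, fun h => h.1⟩
  rw [this] at h2
  change topw w D _ = 1 at h2
  rw [h2] at h
  simpa using h.symm

end

end Aux

end FK
namespace FK

section Comb

variable {ι : Type} {Kc : Finset (Finset ι)}

/-- The numerical properties of the weight function that are used. -/
structure Wt (N : ℕ) (w : SC Kc → ℝ) : Prop where
  pos : ∀ x, 0 < w x
  sum : ∀ z n, fc z ≤ n → n ≤ N + 1 → ∑ x ∈ up n z, w x = (n.choose (fc z) : ℝ) * w z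
  bot : ∀ z, fc z = 0 → w z = 1

/-- Skeleton expansion of links in terms of the global weight. -/
def SkelHyp (N : ℕ) (w : SC Kc → ℝ) (t : ℝ) : Prop :=
  ∀ (j : ℕ) (z : SC Kc), fc z + (j + 1) = N → ∀ S ⊆ up (fc z + 1) z,
    ∑ e ∈ (up (fc z + 2) z).filter (fun e => ∃ x ∈ S, ∃ y ∈ S, x ≠ y ∧ x ≤ e ∧ y ≤ e),
        w e / (((fc z + 2).choose (fc z) : ℝ) * w z)
      ≤ t ^ (2 ^ j) * (∑ x ∈ S, w x / (((fc z : ℝ) + 1) * w z))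
        + (∑ x ∈ S, w x / (((fc z : ℝ) + 1) * w z)) ^ 2

/-- The fat faces. -/
def fat (N : ℕ) (w : SC Kc → ℝ) (t : ℝ) (A : Finset (SC Kc)) : ℕ → Finset (SC Kc)
  | 0 => A
  | j + 1 => Finset.univ.filter fun z => fc z + (j + 1) = N ∧
      t ^ (2 ^ j) * (((fc z : ℝ) + 1) * w z) ≤ ∑ x ∈ (fat N w t A j).filter (fun x => z ≤ x), w x

lemma mem_fat_succ {N : ℕ} {w : SC Kc → ℝ} {t : ℝ} {A : Finset (SC Kc)} {j : ℕ} {z : SC Kc} :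
    z ∈ fat N w t A (j + 1) ↔ fc z + (j + 1) = N ∧
      t ^ (2 ^ j) * (((fc z : ℝ) + 1) * w z) ≤
        ∑ x ∈ (fat N w t A j).filter (fun x => z ≤ x), w x := by
  simp [fat]

lemma card_sub (x : SC Kc) (n : ℕ) :
    (Finset.univ.filter fun z : SC Kc => fc z = n ∧ z ≤ x).card ≤ (fc x).choose n := by
  have e : (fc x).choose n = (x.1.powersetCard n).card := (Finset.card_powersetCard _ _).symm
  rw [e]
  refine Finset.card_le_card_of_injOn (fun z => z.1) ?_ ?_
  · intro z hz
    have hz' : fc z = n ∧ z ≤ x := by simpa using hz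
    simp only [Finset.mem_coe, Finset.mem_powersetCard]
    exact ⟨hz'.2, hz'.1⟩
  · intro a _ b _ h
    exact Subtype.ext h

lemma card_sub_all (x : SC Kc) :
    (Finset.univ.filter fun z : SC Kc => z ≤ x).card ≤ 2 ^ (fc x) := by
  have e : 2 ^ fc x = (x.1.powerset).card := (Finset.card_powerset _).symm
  rw [e]
  refine Finset.card_le_card_of_injOn (fun z => z.1) ?_ ?_
  · intro z hz
    have hz' : z ≤ x := by simpa using hz
    simp only [Finset.mem_coe, Finset.mem_powerset]
    exact hz'
  · intro a _ b _ h
    exact Subtype.ext h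

lemma sum_biUnion_le' {α β : Type*} [DecidableEq β] (s : Finset α) (T : α → Finset β) (f : β → ℝ)
    (hf : ∀ b, 0 ≤ f b) : ∑ b ∈ s.biUnion T, f b ≤ ∑ a ∈ s, ∑ b ∈ T a, f b := by
  induction s using Finset.induction_on with
  | empty => simp
  | insert a s ha ih =>
    rw [Finset.biUnion_insert, Finset.sum_insert ha]
    have h := Finset.sum_union_inter (s₁ := T a) (s₂ := s.biUnion T) (f := f)
    have h2 : 0 ≤ ∑ x ∈ T a ∩ s.biUnion T, f x := Finset.sum_nonneg fun x _ => hf x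
    linarith

section
variable {N : ℕ} {w : SC Kc → ℝ} {t : ℝ} {A : Finset (SC Kc)}

lemma fat_card (hA : ∀ x ∈ A, fc x = N) {j : ℕ} {x : SC Kc} (hx : x ∈ fat N w t A j) :
    fc x + j = N := by
  cases j with
  | zero => exact hA x hx
  | succ j => exact (mem_fat_succ.1 hx).1

/-- Sum over incidences `z ≤ x` with `z` of codimension one. -/
lemma sum_incidence (hpos : ∀ x, 0 < w x) (S Z : Finset (SC Kc)) (n : ℕ)
    (hS : ∀ x ∈ S, fc x = n + 1) (hZ : ∀ z ∈ Z, fc z = n) :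
    ∑ z ∈ Z, ∑ x ∈ S.filter (fun x => z ≤ x), w x ≤ ((n : ℝ) + 1) * ∑ x ∈ S, w x := by
  rw [Finset.sum_comm' (t' := S) (s' := fun x => Z.filter (fun z => z ≤ x))]
  · rw [Finset.mul_sum]
    refine Finset.sum_le_sum fun x hx => ?_
    rw [Finset.sum_const, nsmul_eq_mul]
    refine mul_le_mul_of_nonneg_right ?_ (hpos x).le
    have h1 : (Z.filter (fun z => z ≤ x)).card ≤ n + 1 := by
      refine le_trans (Finset.card_le_card ?_) ((card_sub x n).trans ?_)
      · intro z hz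
        rw [Finset.mem_filter] at hz
        simp only [Finset.mem_filter, Finset.mem_univ, true_and]
        exact ⟨hZ z hz.1, hz.2⟩
      · rw [hS x hx]; simp
    exact_mod_cast h1
  · intro z x
    simp only [Finset.mem_filter]
    tauto

lemma fat_weight (hpos : ∀ x, 0 < w x) (hA : ∀ x ∈ A, fc x = N) (j : ℕ) :
    t ^ (2 ^ j) * ∑ z ∈ fat N w t A (j + 1), w z ≤ ∑ x ∈ fat N w t A j, w x := by
  by_cases hj : j + 1 ≤ N
  · obtain ⟨n, hn⟩ : ∃ n, n + (j + 1) = N := ⟨N - (j + 1), by omega⟩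
    have hZ : ∀ z ∈ fat N w t A (j + 1), fc z = n := fun z hz => by
      have := fat_card hA hz; omega
    have hS : ∀ x ∈ fat N w t A j, fc x = n + 1 := fun z hz => by
      have := fat_card hA hz; omega
    have h := sum_incidence hpos (fat N w t A j) (fat N w t A (j + 1)) n hS hZ
    have h2 : ∑ z ∈ fat N w t A (j + 1), t ^ (2 ^ j) * (((n : ℝ) + 1) * w z) ≤
        ∑ z ∈ fat N w t A (j + 1), ∑ x ∈ (fat N w t A j).filter (fun x => z ≤ x), w x := by
      refine Finset.sum_le_sum fun z hz => ?_
      have := (mem_fat_succ.1 hz).2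
      rwa [hZ z hz] at this
    rw [← Finset.mul_sum, ← Finset.mul_sum] at h2
    have hp : (0 : ℝ) < (n : ℝ) + 1 := by positivity
    refine le_of_mul_le_mul_left ?_ hp
    linarith
  · have : fat N w t A (j + 1) = ∅ := by
      apply Finset.eq_empty_of_forall_notMem
      intro z hz
      have := fat_card hA hz
      omega
    rw [this]
    simp only [Finset.sum_empty, mul_zero]
    exact Finset.sum_nonneg fun x _ => (hpos x).le

lemma fat_weight' (hpos : ∀ x, 0 < w x) (ht : 0 ≤ t) (hA : ∀ x ∈ A, fc x = N) (j : ℕ) :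
    t ^ (2 ^ j - 1) * ∑ z ∈ fat N w t A j, w z ≤ ∑ x ∈ A, w x := by
  induction j with
  | zero => simp [fat]
  | succ j ih =>
    have h := fat_weight (t := t) hpos hA j
    have e : 2 ^ (j + 1) - 1 = (2 ^ j - 1) + 2 ^ j := by
      have : 0 < 2 ^ j := by positivity
      rw [pow_succ]; omega
    rw [e, pow_add, mul_assoc]
    exact (mul_le_mul_of_nonneg_left h (pow_nonneg ht _)).trans ih

lemma fat_top_empty (hW : Wt N w) (ht : 0 ≤ t) (hA : ∀ x ∈ A, fc x = N)
    (hsmall : ∑ x ∈ A, w x < t ^ (2 ^ N - 1)) (z : SC Kc) : z ∉ fat N w t A N := by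
  intro hz
  have h0 : fc z = 0 := by have := fat_card hA hz; omega
  have h1 := fat_weight' hW.pos ht hA N
  have h2 : w z ≤ ∑ z ∈ fat N w t A N, w z :=
    Finset.single_le_sum (f := w) (fun x _ => (hW.pos x).le) hz
  rw [hW.bot z h0] at h2
  have h3 := mul_le_mul_of_nonneg_left h2 (pow_nonneg ht (2 ^ N - 1))
  linarith

/-- Edges in the link of `z` joining two fat faces. -/
def badE (N : ℕ) (w : SC Kc → ℝ) (t : ℝ) (A : Finset (SC Kc)) (j : ℕ) (z : SC Kc) :
    Finset (SC Kc) :=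
  (up (fc z + 2) z).filter (fun e =>
    ∃ x ∈ (fat N w t A j).filter (fun x => z ≤ x),
      ∃ y ∈ (fat N w t A j).filter (fun x => z ≤ x), x ≠ y ∧ x ≤ e ∧ y ≤ e)

lemma badE_bound (hW : Wt N w) (hA : ∀ x ∈ A, fc x = N) (hS : SkelHyp N w t)
    {j : ℕ} {z : SC Kc} (hz : fc z + (j + 1) = N) (hzf : z ∉ fat N w t A (j + 1)) :
    ∑ e ∈ badE N w t A j z, w e ≤
      ((fc z : ℝ) + 2) * t ^ (2 ^ j) * ∑ x ∈ (fat N w t A j).filter (fun x => z ≤ x), w x := by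
  have h := hS j z hz ((fat N w t A j).filter (fun x => z ≤ x)) (by
    intro x hx
    rw [Finset.mem_filter] at hx
    have := fat_card hA hx.1
    rw [mem_up]
    exact ⟨by omega, hx.2⟩)
  rw [← Finset.sum_div, ← Finset.sum_div] at h
  have hlt : ∑ x ∈ (fat N w t A j).filter (fun x => z ≤ x), w x
      < t ^ (2 ^ j) * (((fc z : ℝ) + 1) * w z) := by
    rw [mem_fat_succ] at hzf
    push Not at hzf
    exact hzf hz
  have hs0 : 0 ≤ ∑ x ∈ (fat N w t A j).filter (fun x => z ≤ x), w x :=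
    Finset.sum_nonneg fun x _ => (hW.pos x).le
  change (∑ e ∈ badE N w t A j z, w e) / _ ≤ _ at h
  have hch : ((fc z + 2).choose (fc z) : ℝ) = ((fc z : ℝ) + 2) * ((fc z : ℝ) + 1) / 2 := by
    have e1 : (fc z + 2).choose (fc z) = (fc z + 2).choose 2 := by
      rw [← Nat.choose_symm_of_eq_add (show fc z + 2 = fc z + 2 from rfl)]
    rw [e1, Nat.cast_choose_two]
    push_cast
    ring
  rw [hch] at h
  generalize (∑ e ∈ badE N w t A j z, w e) = B at *
  generalize (∑ x ∈ (fat N w t A j).filter (fun x => z ≤ x), w x) = s at *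
  have hwz := hW.pos z
  have hn : (0 : ℝ) ≤ (fc z : ℝ) := by positivity
  generalize (fc z : ℝ) = n at *
  generalize w z = v at *
  generalize t ^ (2 ^ j) = η at *
  have hpos : 0 < (n + 1) * v := by positivity
  have ha : s / ((n + 1) * v) ≤ η := by
    rw [div_le_iff₀ hpos]; linarith
  have ha0 : 0 ≤ s / ((n + 1) * v) := by positivity
  have h' : B / ((n + 2) * (n + 1) / 2 * v) ≤ 2 * η * (s / ((n + 1) * v)) := by
    nlinarith
  have hpos2 : 0 < (n + 2) * (n + 1) / 2 * v := by positivity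
  rw [div_le_iff₀ hpos2] at h'
  refine h'.trans (le_of_eq ?_)
  field_simp

/-- A face `y` is bad if it contains two adjacent fat faces with non-fat intersection. -/
def Bad (N : ℕ) (w : SC Kc → ℝ) (t : ℝ) (A : Finset (SC Kc)) (y : SC Kc) : Prop :=
  ∃ (j : ℕ) (z : SC Kc), fc z + (j + 1) = N ∧ z ∉ fat N w t A (j + 1) ∧
    ∃ x ∈ fat N w t A j, ∃ x' ∈ fat N w t A j, x ≠ x' ∧ z ≤ x ∧ z ≤ x' ∧ x ≤ y ∧ x' ≤ y

lemma exists_union (hdown : ∀ s ∈ Kc, ∀ t, t ⊆ s → t ∈ Kc) {x x' y z : SC Kc} {n : ℕ}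
    (hx : fc x = n + 1) (hx' : fc x' = n + 1) (hz : fc z = n) (hne : x ≠ x')
    (h1 : z ≤ x) (h2 : z ≤ x') (h3 : x ≤ y) (h4 : x' ≤ y) :
    ∃ e : SC Kc, fc e = n + 2 ∧ x ≤ e ∧ x' ≤ e ∧ e ≤ y := by
  have hsub : x.1 ∪ x'.1 ⊆ y.1 := Finset.union_subset h3 h4
  refine ⟨⟨x.1 ∪ x'.1, hdown _ y.2 _ hsub⟩, ?_, Finset.subset_union_left,
    Finset.subset_union_right, hsub⟩
  change (x.1 ∪ x'.1).card = n + 2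
  have hc := Finset.card_union_add_card_inter x.1 x'.1
  have hi : z.1 ⊆ x.1 ∩ x'.1 := Finset.subset_inter h1 h2
  have hi' := Finset.card_le_card hi
  have hlt : (x.1 ∩ x'.1).card < x.1.card := by
    refine Finset.card_lt_card ⟨Finset.inter_subset_left, fun hh => hne ?_⟩
    have : x ≤ x' := hh.trans Finset.inter_subset_right
    exact eq_of_le_fc this (by omega)
  unfold fc at *
  omega

lemma exists_inter (hdown : ∀ s ∈ Kc, ∀ t, t ⊆ s → t ∈ Kc) {x x' y : SC Kc} {n : ℕ}
    (hx : fc x = n + 1) (hx' : fc x' = n + 1) (hy : fc y = n + 2) (hne : x ≠ x')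
    (h3 : x ≤ y) (h4 : x' ≤ y) :
    ∃ z : SC Kc, fc z = n ∧ z ≤ x ∧ z ≤ x' := by
  have hsub : x.1 ∪ x'.1 ⊆ y.1 := Finset.union_subset h3 h4
  refine ⟨⟨x.1 ∩ x'.1, hdown _ x.2 _ Finset.inter_subset_left⟩, ?_, Finset.inter_subset_left,
    Finset.inter_subset_right⟩
  change (x.1 ∩ x'.1).card = n
  have hc := Finset.card_union_add_card_inter x.1 x'.1
  have hi' := Finset.card_le_card hsub
  have hlt : (x.1 ∩ x'.1).card < x.1.card := by
    refine Finset.card_lt_card ⟨Finset.inter_subset_left, fun hh => hne ?_⟩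
    have : x ≤ x' := hh.trans Finset.inter_subset_right
    exact eq_of_le_fc this (by omega)
  unfold fc at *
  omega

lemma bad_weight (hdown : ∀ s ∈ Kc, ∀ t, t ⊆ s → t ∈ Kc)
    (hW : Wt N w) (ht : 0 < t) (hA : ∀ x ∈ A, fc x = N) (hS : SkelHyp N w t) :
    ∑ y ∈ Finset.univ.filter (fun y => fc y = N + 1 ∧ Bad N w t A y), w y ≤
      (N : ℝ) * (2 ^ (N + 1) * ((N : ℝ) + 1) ^ 2 * t * ∑ x ∈ A, w x) := by
  let Z : ℕ → Finset (SC Kc) := fun j =>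
    Finset.univ.filter fun z => fc z + (j + 1) = N ∧ z ∉ fat N w t A (j + 1)
  have hZ : ∀ j z, z ∈ Z j ↔ fc z + (j + 1) = N ∧ z ∉ fat N w t A (j + 1) := by
    intro j z; simp [Z]
  have hnn : ∀ x, 0 ≤ w x := fun x => (hW.pos x).le
  have hsub : Finset.univ.filter (fun y => fc y = N + 1 ∧ Bad N w t A y) ⊆
      (Finset.range N).biUnion fun j => (Z j).biUnion fun z =>
        (badE N w t A j z).biUnion fun e => up (N + 1) e := by
    intro y hy
    simp only [Finset.mem_filter, Finset.mem_univ, true_and] at hy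
    obtain ⟨hy, j, z, hz, hzf, x, hx, x', hx', hne, h1, h2, h3, h4⟩ := hy
    have c1 := fat_card hA hx
    have c2 := fat_card hA hx'
    obtain ⟨e, he, e1, e2, e3⟩ := exists_union hdown (n := fc z) (by omega) (by omega) rfl hne
      h1 h2 h3 h4
    simp only [Finset.mem_biUnion, Finset.mem_range]
    refine ⟨j, by omega, z, (hZ j z).2 ⟨hz, hzf⟩, e, ?_, ?_⟩
    · rw [badE, Finset.mem_filter, mem_up]
      exact ⟨⟨he, h1.trans e1⟩, x, Finset.mem_filter.2 ⟨hx, h1⟩, x', Finset.mem_filter.2 ⟨hx', h2⟩,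
        hne, e1, e2⟩
    · rw [mem_up]; exact ⟨hy, e3⟩
  refine (Finset.sum_le_sum_of_subset_of_nonneg hsub fun x _ _ => hnn x).trans ?_
  refine (sum_biUnion_le' _ _ _ hnn).trans ?_
  have hN : (N : ℝ) * (2 ^ (N + 1) * ((N : ℝ) + 1) ^ 2 * t * ∑ x ∈ A, w x)
      = ∑ j ∈ Finset.range N, (2 ^ (N + 1) * ((N : ℝ) + 1) ^ 2 * t * ∑ x ∈ A, w x) := by
    simp
  rw [hN]
  refine Finset.sum_le_sum fun j hj => ?_
  rw [Finset.mem_range] at hj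
  obtain ⟨n, hn⟩ : ∃ n, n + (j + 1) = N := ⟨N - (j + 1), by omega⟩
  refine (sum_biUnion_le' _ _ _ hnn).trans ?_
  have step : ∀ z ∈ Z j, ∑ y ∈ (badE N w t A j z).biUnion (fun e => up (N + 1) e), w y ≤
      2 ^ (N + 1) * (((N : ℝ) + 1) * t ^ (2 ^ j)) *
        ∑ x ∈ (fat N w t A j).filter (fun x => z ≤ x), w x := by
    intro z hz
    rw [hZ] at hz
    refine (sum_biUnion_le' _ _ _ hnn).trans ?_
    have h1 : ∑ e ∈ badE N w t A j z, ∑ y ∈ up (N + 1) e, w y ≤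
        ∑ e ∈ badE N w t A j z, 2 ^ (N + 1) * w e := by
      refine Finset.sum_le_sum fun e he => ?_
      rw [badE, Finset.mem_filter, mem_up] at he
      rw [hW.sum e (N + 1) (by omega) le_rfl]
      refine mul_le_mul_of_nonneg_right ?_ (hnn e)
      exact_mod_cast Nat.choose_le_two_pow _ _
    refine h1.trans ?_
    rw [← Finset.mul_sum, mul_assoc]
    refine mul_le_mul_of_nonneg_left ?_ (by positivity)
    refine (badE_bound hW hA hS hz.1 hz.2).trans ?_
    refine mul_le_mul_of_nonneg_right ?_ (Finset.sum_nonneg fun x _ => hnn x)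
    refine mul_le_mul_of_nonneg_right ?_ (by positivity)
    have : fc z + 2 ≤ N + 1 := by omega
    exact_mod_cast this
  refine (Finset.sum_le_sum step).trans ?_
  rw [← Finset.mul_sum]
  have h2 := sum_incidence hW.pos (fat N w t A j) (Z j) n
    (fun x hx => by have := fat_card hA hx; omega) (fun z hz => by rw [hZ] at hz; omega)
  have h3 : t ^ (2 ^ j) * ∑ x ∈ fat N w t A j, w x ≤ t * ∑ x ∈ A, w x := by
    have h := fat_weight' hW.pos ht.le hA j
    have e : 2 ^ j = (2 ^ j - 1) + 1 := by
      have : 0 < 2 ^ j := by positivity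
      omega
    rw [e, pow_succ, mul_comm _ t, mul_assoc]
    exact mul_le_mul_of_nonneg_left h ht.le
  have h4 : ((n : ℝ) + 1) ≤ (N : ℝ) + 1 := by
    have : n ≤ N := by omega
    have : (n : ℝ) ≤ N := by exact_mod_cast this
    linarith
  have hs0 : 0 ≤ ∑ x ∈ fat N w t A j, w x := Finset.sum_nonneg fun x _ => hnn x
  calc 2 ^ (N + 1) * (((N : ℝ) + 1) * t ^ (2 ^ j)) *
        ∑ z ∈ Z j, ∑ x ∈ (fat N w t A j).filter (fun x => z ≤ x), w x
      ≤ 2 ^ (N + 1) * (((N : ℝ) + 1) * t ^ (2 ^ j)) *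
        (((N : ℝ) + 1) * ∑ x ∈ fat N w t A j, w x) := by
        refine mul_le_mul_of_nonneg_left (h2.trans ?_) (by positivity)
        exact mul_le_mul_of_nonneg_right h4 hs0
    _ = 2 ^ (N + 1) * ((N : ℝ) + 1) ^ 2 * (t ^ (2 ^ j) * ∑ x ∈ fat N w t A j, w x) := by ring
    _ ≤ 2 ^ (N + 1) * ((N : ℝ) + 1) ^ 2 * (t * ∑ x ∈ A, w x) :=
        mul_le_mul_of_nonneg_left h3 (by positivity)
    _ = _ := by ring

/-- `u` is connected to `x ∈ A` by a chain of fat faces. -/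
def Chain (N : ℕ) (w : SC Kc → ℝ) (t : ℝ) (A : Finset (SC Kc)) :
    ℕ → SC Kc → SC Kc → Prop
  | 0, u, x => u = x ∧ x ∈ A
  | j + 1, u, x => u ∈ fat N w t A (j + 1) ∧ ∃ v, u ≤ v ∧ Chain N w t A j v x

lemma Chain.fat {j : ℕ} {u x : SC Kc} (h : Chain N w t A j u x) : u ∈ fat N w t A j := by
  cases j with
  | zero => exact h.1 ▸ h.2
  | succ j => exact h.1

lemma Chain.le {j : ℕ} {u x : SC Kc} (h : Chain N w t A j u x) : u ≤ x := by
  induction j generalizing u with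
  | zero => exact h.1.le
  | succ j ih => obtain ⟨_, v, h1, h2⟩ := h; exact h1.trans (ih h2)

lemma Chain.mem {j : ℕ} {u x : SC Kc} (h : Chain N w t A j u x) : x ∈ A := by
  induction j generalizing u with
  | zero => exact h.2
  | succ j ih => obtain ⟨_, v, h1, h2⟩ := h; exact ih h2

lemma chain_step (hdown : ∀ s ∈ Kc, ∀ t, t ⊆ s → t ∈ Kc) (hA : ∀ x ∈ A, fc x = N)
    {x x' y : SC Kc} (hy : fc y = N + 1) (hgood : ¬ Bad N w t A y)
    (hxy : x ≤ y) (hx' : x' ∈ A) (hx'y : x' ≤ y) (j : ℕ) (u : SC Kc)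
    (h : Chain N w t A j u x) :
    Chain N w t A j u x' ∨ ∃ v, v ≤ u ∧ Chain N w t A (j + 1) v x' := by
  -- intersections of adjacent fat faces are fat
  have good : ∀ (j n : ℕ) (a b : SC Kc), a ∈ fat N w t A j → b ∈ fat N w t A j → a ≠ b →
      a ≤ y → b ≤ y → (∃ c, fc c = fc a + 1 ∧ a ≤ c ∧ b ≤ c) →
      ∃ z ∈ fat N w t A (j + 1), z ≤ a ∧ z ≤ b := by
    rintro j n a b ha hb hab hay hby ⟨c, hc, hac, hbc⟩
    have c1 := fat_card hA ha
    have c2 := fat_card hA hb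
    have hne : fc a ≠ 0 := by
      intro h0
      apply hab
      apply Subtype.ext
      have e1 : a.1 = ∅ := Finset.card_eq_zero.1 h0
      have e2 : b.1 = ∅ := Finset.card_eq_zero.1 (show fc b = 0 by omega)
      rw [e1, e2]
    obtain ⟨m, hm⟩ : ∃ m, fc a = m + 1 := ⟨fc a - 1, by omega⟩
    obtain ⟨z, hz, hza, hzb⟩ := exists_inter hdown hm (by omega) (by omega) hab hac hbc
    refine ⟨z, ?_, hza, hzb⟩
    by_contra hzf
    exact hgood ⟨j, z, by omega, hzf, a, ha, b, hb, hab, hza, hzb, hay, hby⟩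
  induction j generalizing u with
  | zero =>
    obtain ⟨rfl, hu⟩ := h
    by_cases hux : u = x'
    · left; exact ⟨hux, hx'⟩
    · right
      obtain ⟨z, hz, h1, h2⟩ := good 0 0 u x' hu hx' hux hxy hx'y
        ⟨y, by rw [hA u hu]; exact hy, hxy, hx'y⟩
      exact ⟨z, h1, hz, x', h2, rfl, hx'⟩
  | succ j ih =>
    have hu := h.fat
    obtain ⟨_, v, huv, hv⟩ := h
    have hvy : v ≤ y := hv.le.trans hxy
    rcases ih v hv with h1 | ⟨v', hv'v, h1⟩
    · left; exact ⟨hu, v, huv, h1⟩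
    · by_cases hne : u = v'
      · left; rw [hne]; exact h1
      · right
        have c1 := fat_card hA hu
        have c2 := fat_card hA hv.fat
        obtain ⟨z, hz, hz1, hz2⟩ := good (j + 1) 0 u v' hu h1.fat hne (huv.trans hvy)
          (hv'v.trans hvy) ⟨v, by omega, huv, hv'v⟩
        exact ⟨z, hz1, hz, v', hz2, h1⟩

/-- Minimal fat faces. -/
def IsMinFat (N : ℕ) (w : SC Kc → ℝ) (t : ℝ) (A : Finset (SC Kc)) (j : ℕ) (u : SC Kc) : Prop :=
  u ∈ fat N w t A j ∧ ∀ v, v ≤ u → v ∉ fat N w t A (j + 1)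

lemma exists_minFat (hempty : ∀ z, z ∉ fat N w t A N) {x : SC Kc} (hx : x ∈ A) :
    ∃ j < N, ∃ u, IsMinFat N w t A j u ∧ Chain N w t A j u x := by
  by_contra hcon
  push Not at hcon
  have : ∀ j ≤ N, ∃ u, Chain N w t A j u x := by
    intro j
    induction j with
    | zero => intro _; exact ⟨x, rfl, hx⟩
    | succ j ih =>
      intro hj
      obtain ⟨u, hu⟩ := ih (by omega)
      by_contra hno
      push Not at hno
      refine hcon j (by omega) u ⟨hu.fat, fun v hv hvf => ?_⟩ hu
      exact hno v ⟨hvf, u, hv, hu⟩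
  obtain ⟨u, hu⟩ := this N le_rfl
  exact hempty u hu.fat

end

end Comb

end FK
namespace FK

section Final

variable {ι : Type} {Kc : Finset (Finset ι)} {N : ℕ} {w : SC Kc → ℝ} {t : ℝ}
  {A : Finset (SC Kc)}

lemma comb_final (hdown : ∀ s ∈ Kc, ∀ t, t ⊆ s → t ∈ Kc)
    (hW : Wt N w) (hN : 0 < N) (hA : ∀ x ∈ A, fc x = N) {K ε q : ℝ} (hK : 0 < K) (hε : 0 < ε)
    (ht : t = K * ε) (ht1 : t ≤ 1) (hS : SkelHyp N w t)
    (hsmall : ∑ x ∈ A, w x < t ^ (2 ^ N - 1))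
    (hKN : 2 * (4 ^ (N + 1) * (N * ((N : ℝ) + 1) ^ 2)) * K < 1) (hq0 : 0 ≤ q)
    (hq : 2 * (N : ℝ) * q ≤ t ^ (2 ^ (N - 1)))
    (hmin : ∀ j < N, ∀ u, IsMinFat N w t A j u →
      ε * (∑ x ∈ A.filter (fun x => Chain N w t A j u x), w x - q * w u) ≤
        ∑ y ∈ (up (N + 1) u).filter (fun y => Bad N w t A y), w y) :
    A = ∅ := by
  have htp : 0 < t := by rw [ht]; positivity
  have hnn : ∀ x, 0 ≤ w x := fun x => (hW.pos x).le
  let U : Finset (SC Kc) := Finset.univ.filter fun u =>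
    ∃ j < N, IsMinFat N w t A j u
  have hU : ∀ u, u ∈ U ↔ ∃ j < N, IsMinFat N w t A j u := by intro u; simp [U]
  have hUj : ∀ u ∈ U, N - fc u < N ∧ IsMinFat N w t A (N - fc u) u := by
    intro u hu
    obtain ⟨j, hj, h⟩ := (hU u).1 hu
    have := fat_card hA h.1
    have e : N - fc u = j := by omega
    rw [e]; exact ⟨hj, h⟩
  set W := ∑ x ∈ A, w x with hWdef
  have hW0 : 0 ≤ W := Finset.sum_nonneg fun x _ => hnn x
  have i1 : W ≤ ∑ u ∈ U, ∑ x ∈ A.filter (fun x => Chain N w t A (N - fc u) u x), w x := by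
    refine le_trans ?_ (sum_biUnion_le' _ _ _ hnn)
    refine Finset.sum_le_sum_of_subset_of_nonneg ?_ fun x _ _ => hnn x
    intro x hx
    obtain ⟨j, hj, u, hu, hc⟩ := exists_minFat (fat_top_empty hW htp.le hA hsmall) hx
    rw [Finset.mem_biUnion]
    have := fat_card hA hu.1
    have e : N - fc u = j := by omega
    exact ⟨u, (hU u).2 ⟨j, hj, hu⟩, Finset.mem_filter.2 ⟨hx, by rw [e]; exact hc⟩⟩
  have i2 : 2 * q * ∑ u ∈ U, w u ≤ W := by
    have h1 : ∑ u ∈ U, w u ≤ ∑ j ∈ Finset.range N, ∑ u ∈ fat N w t A j, w u := by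
      refine le_trans ?_ (sum_biUnion_le' _ _ _ hnn)
      refine Finset.sum_le_sum_of_subset_of_nonneg ?_ fun x _ _ => hnn x
      intro u hu
      rw [Finset.mem_biUnion]
      obtain ⟨j, hj, h⟩ := (hU u).1 hu
      exact ⟨j, Finset.mem_range.2 hj, h.1⟩
    have h2 : ∑ j ∈ Finset.range N, 2 * (N : ℝ) * q * ∑ u ∈ fat N w t A j, w u ≤
        ∑ j ∈ Finset.range N, W := by
      refine Finset.sum_le_sum fun j hj => ?_
      rw [Finset.mem_range] at hj
      have hs0 : 0 ≤ ∑ u ∈ fat N w t A j, w u := Finset.sum_nonneg fun x _ => hnn x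
      refine le_trans ?_ (fat_weight' hW.pos htp.le hA j)
      refine mul_le_mul_of_nonneg_right (hq.trans ?_) hs0
      refine pow_le_pow_of_le_one htp.le ht1 ?_
      have : 2 ^ j ≤ 2 ^ (N - 1) := Nat.pow_le_pow_right (by norm_num) (by omega)
      exact (Nat.sub_le _ _).trans this
    rw [← Finset.mul_sum, Finset.sum_const, Finset.card_range, nsmul_eq_mul] at h2
    have hNp : (0 : ℝ) < N := by exact_mod_cast hN
    have h3 := mul_le_mul_of_nonneg_left h1 (show 0 ≤ 2 * (N : ℝ) * q by positivity)
    refine le_of_mul_le_mul_left ?_ hNp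
    linarith
  have i3 : ∑ u ∈ U, ∑ y ∈ (up (N + 1) u).filter (fun y => Bad N w t A y), w y ≤
      2 ^ (N + 1) * ∑ y ∈ Finset.univ.filter (fun y => fc y = N + 1 ∧ Bad N w t A y), w y := by
    rw [Finset.sum_comm' (t' := Finset.univ.filter (fun y => fc y = N + 1 ∧ Bad N w t A y))
      (s' := fun y => U.filter (fun u => u ≤ y))]
    · rw [Finset.mul_sum]
      refine Finset.sum_le_sum fun y hy => ?_
      simp only [Finset.mem_filter, Finset.mem_univ, true_and] at hy
      rw [Finset.sum_const, nsmul_eq_mul]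
      refine mul_le_mul_of_nonneg_right ?_ (hnn y)
      have h1 : (U.filter (fun u => u ≤ y)).card ≤ 2 ^ (N + 1) := by
        refine le_trans (Finset.card_le_card ?_) (hy.1 ▸ card_sub_all y)
        intro u hu
        rw [Finset.mem_filter] at hu
        simpa using hu.2
      exact_mod_cast h1
    · intro u y
      simp only [Finset.mem_filter, mem_up, Finset.mem_univ, true_and]
      tauto
  have i4 : ∑ u ∈ U, ε * (∑ x ∈ A.filter (fun x => Chain N w t A (N - fc u) u x), w x - q * w u)
      ≤ ∑ u ∈ U, ∑ y ∈ (up (N + 1) u).filter (fun y => Bad N w t A y), w y :=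
    Finset.sum_le_sum fun u hu => hmin _ (hUj u hu).1 u (hUj u hu).2
  rw [← Finset.mul_sum, Finset.sum_sub_distrib, ← Finset.mul_sum] at i4
  have i5 := bad_weight hdown hW htp hA hS
  have i6 : ε * (W / 2) ≤ 2 ^ (N + 1) *
      ((N : ℝ) * (2 ^ (N + 1) * ((N : ℝ) + 1) ^ 2 * t * W)) := by
    refine le_trans (le_trans ?_ (i4.trans i3)) (mul_le_mul_of_nonneg_left i5 (by positivity))
    refine mul_le_mul_of_nonneg_left ?_ hε.le
    linarith
  have e4 : (4 : ℝ) ^ (N + 1) = 2 ^ (N + 1) * 2 ^ (N + 1) := by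
    rw [← mul_pow]; norm_num
  have i7 : ε * W ≤ ε * ((2 * (4 ^ (N + 1) * (N * ((N : ℝ) + 1) ^ 2)) * K) * W) := by
    rw [e4]
    rw [ht] at i6
    linarith
  have i8 : W ≤ (2 * (4 ^ (N + 1) * (N * ((N : ℝ) + 1) ^ 2)) * K) * W :=
    le_of_mul_le_mul_left i7 hε
  have hWz : W = 0 := by
    by_contra hne
    have hWp : 0 < W := lt_of_le_of_ne hW0 (Ne.symm hne)
    have := mul_lt_mul_of_pos_right hKN hWp
    linarith
  by_contra hne
  obtain ⟨x, hx⟩ := Finset.nonempty_iff_ne_empty.2 hne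
  have : w x ≤ W := Finset.single_le_sum (f := w) (fun x _ => hnn x) hx
  have := hW.pos x
  linarith

end Final

end FK
namespace FK

set_option linter.unusedSectionVars false

section Alg

variable {V : Type*} [Fintype V] [PartialOrder V]
variable {R : Type*} [CommRing R] {dim : V → ℤ} {F : V → Type*}
  [∀ x, AddCommGroup (F x)] [∀ x, Module R (F x)]
  {sgn : V → V → R} {res : ∀ x y : V, x ≤ y → (F x →ₗ[R] F y)}
  {w : V → ℝ} {d : ℤ}

lemma coboundary_add (i j : ℤ) (f g : Cochain dim F i) :
    coboundary dim F sgn res i j (f + g) =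
      coboundary dim F sgn res i j f + coboundary dim F sgn res i j g := by
  funext y
  simp only [coboundary, Pi.add_apply]
  rw [← Finset.sum_add_distrib]
  refine Finset.sum_congr rfl fun x _ => ?_
  split_ifs <;> simp

lemma lcoboundary_neg (u : V) (i j : ℤ) (f : LCochain dim F u i) :
    lcoboundary dim F sgn res u i j (-f) = - lcoboundary dim F sgn res u i j f := by
  funext y
  simp only [lcoboundary, Pi.neg_apply]
  rw [← Finset.sum_neg_distrib]
  refine Finset.sum_congr rfl fun x _ => ?_
  split_ifs <;> simp

lemma coboundary_coboundary (hmono : ∀ ⦃x y : V⦄, x < y → dim x < dim y)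
    (ho : IsOrientation R dim sgn) (hres : IsSheafRes R F res) {i j l : ℤ} (hj : j = i + 1)
    (hl : l = j + 1) (f : Cochain dim F i) :
    coboundary dim F sgn res j l (coboundary dim F sgn res i j f) = 0 := by
  funext z
  change coboundary dim F sgn res j l (coboundary dim F sgn res i j f) z = 0
  have e1 : coboundary dim F sgn res j l (coboundary dim F sgn res i j f) z =
      ∑ y : {y : V // dim y = j}, ∑ x : {x : V // dim x = i},
        if h : x.1 ≤ y.1 ∧ y.1 ≤ z.1 then
          (sgn z.1 y.1 * sgn y.1 x.1) • res x.1 z.1 (h.1.trans h.2) (f x) else 0 := by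
    rw [coboundary]
    refine Finset.sum_congr rfl fun y _ => ?_
    by_cases hy : y.1 ≤ z.1
    · rw [dif_pos hy, coboundary, map_sum, Finset.smul_sum]
      refine Finset.sum_congr rfl fun x _ => ?_
      by_cases hx : x.1 ≤ y.1
      · rw [dif_pos hx, dif_pos ⟨hx, hy⟩, map_smul, smul_smul, ← hres.trans hx hy]
        rfl
      · rw [dif_neg hx, dif_neg (fun h => hx h.1)]; simp
    · rw [dif_neg hy]
      symm
      refine Finset.sum_eq_zero fun x _ => ?_
      rw [dif_neg (fun h => hy h.2)]
  rw [e1, Finset.sum_comm]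
  refine Finset.sum_eq_zero fun x _ => ?_
  by_cases hxz : x.1 ≤ z.1
  · have hd : dim z.1 = dim x.1 + 2 := by rw [z.2, x.2]; omega
    have hs := ho.sum_eq_zero hxz hd
    have e2 : (∑ y : {y : V // dim y = j}, if h : x.1 ≤ y.1 ∧ y.1 ≤ z.1 then
          (sgn z.1 y.1 * sgn y.1 x.1) • res x.1 z.1 (h.1.trans h.2) (f x) else 0) =
        (∑ y : {y : V // dim y = j}, if x.1 ≤ y.1 ∧ y.1 ≤ z.1 then
          (sgn z.1 y.1 * sgn y.1 x.1) else 0) • res x.1 z.1 hxz (f x) := by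
      rw [Finset.sum_smul]
      refine Finset.sum_congr rfl fun y _ => ?_
      split_ifs <;> simp
    have e3 : (∑ y : {y : V // dim y = j}, if x.1 ≤ y.1 ∧ y.1 ≤ z.1 then
          (sgn z.1 y.1 * sgn y.1 x.1) else 0) =
        ∑ y ∈ Finset.univ.filter (fun y => x.1 < y ∧ y < z.1), sgn z.1 y * sgn y x.1 := by
      rw [← Finset.sum_subtype (Finset.univ.filter fun y : V => dim y = j) (by simp)
        (fun y => if x.1 ≤ y ∧ y ≤ z.1 then (sgn z.1 y * sgn y x.1) else 0)]
      rw [← Finset.sum_filter, Finset.filter_filter]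
      refine Finset.sum_congr ?_ fun _ _ => rfl
      ext y
      simp only [Finset.mem_filter, Finset.mem_univ, true_and]
      have hx2 := x.2
      have hz2 := z.2
      constructor
      · rintro ⟨h1, h2, h3⟩
        refine ⟨lt_of_le_of_ne h2 ?_, lt_of_le_of_ne h3 ?_⟩
        · intro h; rw [h] at hx2; omega
        · intro h; rw [← h] at hz2; omega
      · rintro ⟨h1, h2⟩
        have := hmono h1
        have := hmono h2
        exact ⟨by omega, h1.le, h2.le⟩
    rw [e2, e3, hs, zero_smul]
  · refine Finset.sum_eq_zero fun y _ => ?_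
    rw [dif_neg (fun h => hxz (h.1.trans h.2))]

lemma coboundary_extend (u : V) (i j : ℤ) (b : LCochain dim F u i) :
    coboundary dim F sgn res i j (extendByZero dim F u b) =
      extendByZero dim F u (lcoboundary dim F sgn res u i j b) := by
  funext y
  by_cases hy : u ≤ y.1
  · simp only [extendByZero, dif_pos hy, coboundary, lcoboundary]
    let G : V → F y.1 := fun x =>
      if h : x ≤ y.1 ∧ dim x = i ∧ u ≤ x then sgn y.1 x • res x y.1 h.1 (b ⟨x, h.2⟩) else 0
    have hGp : ∀ x (h : x ≤ y.1 ∧ dim x = i ∧ u ≤ x),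
        G x = sgn y.1 x • res x y.1 h.1 (b ⟨x, h.2⟩) := fun x h => dif_pos h
    have hGn : ∀ x, ¬ (x ≤ y.1 ∧ dim x = i ∧ u ≤ x) → G x = 0 := fun x h => dif_neg h
    have e1 : (∑ x : {x : V // dim x = i ∧ u ≤ x},
        if h : x.1 ≤ y.1 then sgn y.1 x.1 • res x.1 y.1 h (b x) else 0) = ∑ x : V, G x := by
      have : ∑ x : V, G x = ∑ x ∈ Finset.univ.filter (fun x : V => dim x = i ∧ u ≤ x), G x := by
        symm
        refine Finset.sum_subset (Finset.filter_subset _ _) fun x _ hx => ?_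
        simp only [Finset.mem_filter, Finset.mem_univ, true_and] at hx
        exact dif_neg (fun h => hx h.2)
      rw [this, Finset.sum_subtype (p := fun x => dim x = i ∧ u ≤ x) _ (by simp)]
      refine Finset.sum_congr rfl fun x _ => ?_
      by_cases h : x.1 ≤ y.1
      · rw [dif_pos h]; exact (hGp x.1 ⟨h, x.2⟩).symm
      · rw [dif_neg h]; exact (hGn x.1 (fun hh => h hh.1)).symm
    have e2 : ∑ x : V, G x = ∑ x : {x : V // dim x = i}, G x.1 := by
      have : ∑ x : V, G x = ∑ x ∈ Finset.univ.filter (fun x : V => dim x = i), G x := by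
        symm
        refine Finset.sum_subset (Finset.filter_subset _ _) fun x _ hx => ?_
        simp only [Finset.mem_filter, Finset.mem_univ, true_and] at hx
        exact dif_neg (fun h => hx h.2.1)
      rw [this, Finset.sum_subtype (p := fun x => dim x = i) _ (by simp)]
    rw [e1, e2]
    refine Finset.sum_congr rfl fun x _ => ?_
    by_cases h : x.1 ≤ y.1
    · rw [dif_pos h]
      by_cases h2 : u ≤ x.1
      · rw [dif_pos h2]; exact (hGp x.1 ⟨h, x.2, h2⟩).symm
      · rw [dif_neg h2, map_zero, smul_zero]; exact (hGn x.1 (fun hh => h2 hh.2.2)).symm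
    · rw [dif_neg h]; exact (hGn x.1 (fun hh => h hh.1)).symm
  · simp only [extendByZero, dif_neg hy, coboundary]
    refine Finset.sum_eq_zero fun x _ => ?_
    by_cases h : x.1 ≤ y.1
    · have h2 : ¬ u ≤ x.1 := fun h2 => hy (h2.trans h)
      rw [dif_pos h, dif_neg h2, map_zero, smul_zero]
    · rw [dif_neg h]

/-- The support of a cochain. -/
def supp {i : ℤ} (f : Cochain dim F i) : Finset V :=
  Finset.univ.filter fun x => ∃ h : dim x = i, f ⟨x, h⟩ ≠ 0

lemma mem_supp {i : ℤ} {f : Cochain dim F i} {x : V} :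
    x ∈ supp f ↔ ∃ h : dim x = i, f ⟨x, h⟩ ≠ 0 := by
  simp [supp]

lemma cnorm_eq {i : ℤ} (f : Cochain dim F i) : cnorm dim F w f = ∑ x ∈ supp f, w x := by
  rw [cnorm, ← Finset.sum_filter]
  symm
  refine Finset.sum_bij' (i := fun x hx => ⟨x, (mem_supp.1 hx).1⟩) (j := fun x _ => x.1) ?_ ?_ ?_ ?_ ?_
  · intro x hx
    obtain ⟨h, hx'⟩ := mem_supp.1 hx
    simpa using hx'
  · intro x hx
    rw [Finset.mem_filter] at hx
    exact mem_supp.2 ⟨x.2, hx.2⟩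
  · intros; rfl
  · intros; rfl
  · intros; rfl

lemma supp_extend {u : V} {i : ℤ} {b : LCochain dim F u i} {x : V}
    (hx : x ∈ supp (extendByZero dim F u b)) : dim x = i ∧ u ≤ x := by
  obtain ⟨h, hx⟩ := mem_supp.1 hx
  refine ⟨h, ?_⟩
  by_contra hu
  exact hx (dif_neg hu)

lemma lnorm_eq (u : V) {i : ℤ} (b : LCochain dim F u i) :
    lnorm dim F w d u b = ∑ x ∈ supp (extendByZero dim F u b), linkWeight dim d w u x := by
  rw [lnorm, ← Finset.sum_filter]
  symm
  refine Finset.sum_bij' (i := fun x hx => ⟨x, supp_extend hx⟩) (j := fun x _ => x.1) ?_ ?_ ?_ ?_ ?_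
  · intro x hx
    have h := supp_extend hx
    obtain ⟨h', hx'⟩ := mem_supp.1 hx
    have : extendByZero dim F u b ⟨x, h'⟩ = b ⟨x, h⟩ := dif_pos h.2
    rw [this] at hx'
    simpa using hx'
  · intro x hx
    rw [Finset.mem_filter] at hx
    refine mem_supp.2 ⟨x.2.1, ?_⟩
    have : extendByZero dim F u b ⟨x.1, x.2.1⟩ = b x := dif_pos x.2.2
    rw [this]
    exact hx.2
  · intros; rfl
  · intros; rfl
  · intros; rfl

lemma cnorm_nonneg (hw : ∀ x, 0 < w x) {i : ℤ} (f : Cochain dim F i) : 0 ≤ cnorm dim F w f := by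
  rw [cnorm_eq]
  exact Finset.sum_nonneg fun x _ => (hw x).le

lemma cnorm_add_le (hw : ∀ x, 0 < w x) {i : ℤ} (f g : Cochain dim F i) :
    cnorm dim F w (f + g) ≤ cnorm dim F w f + cnorm dim F w g := by
  unfold cnorm
  rw [← Finset.sum_add_distrib]
  refine Finset.sum_le_sum fun x _ => ?_
  have := hw x.1
  by_cases h1 : f x = 0
  · by_cases h2 : g x = 0
    · simp [h1, h2]
    · simp [h1, h2]
  · by_cases h2 : g x = 0
    · simp [h1, h2]
    · rw [if_pos h1, if_pos h2]
      split_ifs <;> linarith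

lemma cnorm_neg {i : ℤ} (f : Cochain dim F i) : cnorm dim F w (-f) = cnorm dim F w f := by
  simp [cnorm]

lemma exists_min_of_cnorm {α : Type*} [Nonempty α] {i j : ℤ} (a b : ℝ) (P : α → Cochain dim F i)
    (Q : α → Cochain dim F j) :
    ∃ h : α, ∀ h' : α, a * cnorm dim F w (P h) + b * cnorm dim F w (Q h) ≤
      a * cnorm dim F w (P h') + b * cnorm dim F w (Q h') := by
  let Φ : Finset V × Finset V → ℝ := fun p => a * ∑ x ∈ p.1, w x + b * ∑ x ∈ p.2, w x
  have hfin : (Set.range fun h : α => (supp (P h), supp (Q h))).Finite := Set.toFinite _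
  obtain ⟨p, ⟨h, rfl⟩, hp⟩ := Set.exists_min_image _ Φ hfin (Set.range_nonempty _)
  refine ⟨h, fun h' => ?_⟩
  simp only [cnorm_eq]
  exact hp _ ⟨h', rfl⟩

end Alg

end FK
namespace FK

section Main

variable {ι : Type} {Kc : Finset (Finset ι)}
variable {R : Type} [CommRing R] {F : SC Kc → Type}
  [∀ x, AddCommGroup (F x)] [∀ x, Module R (F x)]
  {sgn : SC Kc → SC Kc → R} {res : ∀ x y : SC Kc, x ≤ y → (F x →ₗ[R] F y)}
  {w : SC Kc → ℝ} {d : ℤ}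

lemma extend_apply (u : SC Kc) {i : ℤ} (b : LCochain sdim F u i)
    (x : {x : SC Kc // sdim x = i}) (h : u ≤ x.1) :
    extendByZero sdim F u b x = b ⟨x.1, x.2, h⟩ := dif_pos h

lemma extend_apply_neg (u : SC Kc) {i : ℤ} (b : LCochain sdim F u i)
    (x : {x : SC Kc // sdim x = i}) (h : ¬ u ≤ x.1) :
    extendByZero sdim F u b x = 0 := dif_neg h

lemma lnorm_eq_cnorm
    (hlw : ∀ u x : SC Kc, u ≤ x → linkWeight sdim d w u x =
      w x / (((fc x).choose (fc u) : ℝ) * w u))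
    (u : SC Kc) {i : ℤ} {n : ℕ} (hi : i = (n : ℤ) - 1) (b : LCochain sdim F u i) :
    lnorm sdim F w d u b =
      cnorm sdim F w (extendByZero sdim F u b) / ((n.choose (fc u) : ℝ) * w u) := by
  rw [lnorm_eq, cnorm_eq, Finset.sum_div]
  refine Finset.sum_congr rfl fun x hx => ?_
  obtain ⟨h1, h2⟩ := supp_extend hx
  have : fc x = n := by rw [sdim_eq] at h1; omega
  rw [hlw u x h2, this]

lemma small_cocycle_zero (hdown : ∀ s ∈ Kc, ∀ t, t ⊆ s → t ∈ Kc) {N : ℕ}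
    (hW : Wt N w)
    (hlw : ∀ u x : SC Kc, u ≤ x → linkWeight sdim d w u x =
      w x / (((fc x).choose (fc u) : ℝ) * w u))
    (hN : 0 < N) {m : ℤ} (hm : m = (N : ℤ) - 1) {K ε q t : ℝ} (hK : 0 < K) (hε : 0 < ε)
    (ht : t = K * ε) (ht1 : t ≤ 1) (hS : SkelHyp N w t)
    (hKN : 2 * (4 ^ (N + 1) * (N * ((N : ℝ) + 1) ^ 2)) * K < 1) (hq0 : 0 ≤ q)
    (hq : 2 * (N : ℝ) * q ≤ t ^ (2 ^ (N - 1)))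
    (hcbe : ∀ u : SC Kc, 0 ≤ sdim u → sdim u ≤ m → LinkCbeGe sdim F sgn res w d u m ε)
    (f : Cochain (sdim (Kc := Kc)) F m)
    (hsmall : cnorm sdim F w f < t ^ (2 ^ N - 1))
    (hf : coboundary sdim F sgn res m (m + 1) f = 0)
    (hmin : ∀ u : SC Kc, 0 ≤ sdim u → sdim u ≤ m → ∀ b : LCochain sdim F u (m - 1),
      cnorm sdim F w f ≤
        cnorm sdim F w (f + extendByZero sdim F u (lcoboundary sdim F sgn res u (m - 1) m b))
          + q * w u) :
    f = 0 := by
  have hA : ∀ x ∈ supp f, fc x = N := by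
    intro x hx
    obtain ⟨h, _⟩ := mem_supp.1 hx
    rw [sdim_eq] at h
    omega
  have hsmall' : ∑ x ∈ supp f, w x < t ^ (2 ^ N - 1) := by rwa [← cnorm_eq]
  have key : supp f = ∅ := by
    refine comb_final hdown hW hN hA hK hε ht ht1 hS hsmall' hKN hq0 hq ?_
    intro j hj u hu
    have hcu := fat_card hA hu.1
    have hu0 : 0 ≤ sdim u := by rw [sdim_eq]; omega
    have hum : sdim u ≤ m := by rw [sdim_eq]; omega
    have hwu := hW.pos u
    -- the restriction of `f` to the faces reachable from `u`
    let g : LCochain sdim F u m := fun x =>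
      if Chain N w t (supp f) j u x.1 then f ⟨x.1, x.2.1⟩ else 0
    have hg : ∀ x : {x : SC Kc // sdim x = m}, extendByZero sdim F u g x =
        if Chain N w t (supp f) j u x.1 then f x else 0 := by
      intro x
      by_cases h : u ≤ x.1
      · rw [extend_apply u g x h]
      · rw [extend_apply_neg u g x h, if_neg (fun hc => h hc.le)]
    have hP : cnorm sdim F w (extendByZero sdim F u g) =
        ∑ x ∈ (supp f).filter (fun x => Chain N w t (supp f) j u x), w x := by
      rw [cnorm_eq]
      refine Finset.sum_congr ?_ fun _ _ => rfl
      ext x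
      rw [Finset.mem_filter, mem_supp, mem_supp]
      constructor
      · rintro ⟨h, hx⟩
        rw [hg] at hx
        by_cases hc : Chain N w t (supp f) j u x
        · rw [if_pos hc] at hx; exact ⟨⟨h, hx⟩, hc⟩
        · rw [if_neg hc] at hx; exact absurd rfl hx
      · rintro ⟨⟨h, hx⟩, hc⟩
        refine ⟨h, ?_⟩
        rw [hg, if_pos hc]; exact hx
    have hsplit : cnorm sdim F w f =
        cnorm sdim F w (f - extendByZero sdim F u g) + cnorm sdim F w (extendByZero sdim F u g) := by
      unfold cnorm
      rw [← Finset.sum_add_distrib]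
      refine Finset.sum_congr rfl fun x _ => ?_
      rw [Pi.sub_apply, hg]
      by_cases hc : Chain N w t (supp f) j u x.1
      · simp [hc]
      · simp [hc]
    rw [← hP]
    set P := cnorm sdim F w (extendByZero sdim F u g) with hPdef
    have hC : (0 : ℝ) < ((N.choose (fc u) : ℕ) : ℝ) := by
      exact_mod_cast Nat.choose_pos (by omega)
    have hCC : ((N.choose (fc u) : ℕ) : ℝ) ≤ (((N + 1).choose (fc u) : ℕ) : ℝ) := by
      exact_mod_cast Nat.choose_le_choose _ (by omega)
    have hinf : (P - q * w u) / ((N.choose (fc u) : ℝ) * w u) ≤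
        sInf ((fun g' => lnorm sdim F w d u (g - g')) '' lcoboundariesSet sdim F sgn res u m) := by
      refine le_csInf ?_ ?_
      · exact Set.Nonempty.image _ ⟨_, 0, rfl⟩
      · rintro _ ⟨_, ⟨b, rfl⟩, rfl⟩
        simp only
        rw [lnorm_eq_cnorm hlw u hm]
        refine div_le_div_of_nonneg_right ?_ (by positivity)
        have h1 := hmin u hu0 hum (-b)
        rw [lcoboundary_neg] at h1
        have e : f + extendByZero sdim F u (- lcoboundary sdim F sgn res u (m - 1) m b) =
            (f - extendByZero sdim F u g) +
              extendByZero sdim F u (g - lcoboundary sdim F sgn res u (m - 1) m b) := by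
          funext x
          simp only [Pi.add_apply, Pi.sub_apply]
          by_cases h : u ≤ x.1
          · rw [extend_apply _ _ _ h, extend_apply _ _ _ h, extend_apply _ _ _ h]
            simp only [Pi.neg_apply, Pi.sub_apply]
            abel
          · rw [extend_apply_neg _ _ _ h, extend_apply_neg _ _ _ h, extend_apply_neg _ _ _ h]
            abel
        rw [e] at h1
        have h2 := cnorm_add_le hW.pos (f - extendByZero sdim F u g)
          (extendByZero sdim F u (g - lcoboundary sdim F sgn res u (m - 1) m b))
        linarith
    have hb : cnorm sdim F w (extendByZero sdim F u (lcoboundary sdim F sgn res u m (m + 1) g)) ≤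
        ∑ y ∈ (up (N + 1) u).filter (fun y => Bad N w t (supp f) y), w y := by
      rw [cnorm_eq]
      refine Finset.sum_le_sum_of_subset_of_nonneg ?_ fun x _ _ => (hW.pos x).le
      intro y hy
      obtain ⟨hyd, hyu⟩ := supp_extend hy
      have hyc : fc y = N + 1 := by rw [sdim_eq] at hyd; omega
      rw [Finset.mem_filter, mem_up]
      refine ⟨⟨hyc, hyu⟩, ?_⟩
      by_contra hgood
      obtain ⟨_, hy⟩ := mem_supp.1 hy
      rw [← coboundary_extend] at hy
      apply hy
      by_cases hex : ∃ x, x ≤ y ∧ Chain N w t (supp f) j u x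
      · obtain ⟨x, hxy, hxc⟩ := hex
        have hfy : coboundary sdim F sgn res m (m + 1) f ⟨y, hyd⟩ = 0 := by rw [hf]; rfl
        rw [← hfy]
        unfold coboundary
        refine Finset.sum_congr rfl fun x' _ => ?_
        by_cases hx'y : x'.1 ≤ y
        · rw [dif_pos hx'y, dif_pos hx'y, hg]
          by_cases hfx : f x' = 0
          · simp [hfx]
          · have hx's : x'.1 ∈ supp f := mem_supp.2 ⟨x'.2, hfx⟩
            rcases chain_step hdown hA hyc hgood hxy hx's hx'y j u hxc with hc | ⟨v, hv, hc⟩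
            · rw [if_pos hc]
            · exact absurd hc.fat (hu.2 v hv)
        · rw [dif_neg hx'y, dif_neg hx'y]
      · unfold coboundary
        refine Finset.sum_eq_zero fun x' _ => ?_
        by_cases hx'y : x'.1 ≤ y
        · rw [dif_pos hx'y, hg, if_neg (fun hc => hex ⟨x'.1, hx'y, hc⟩)]
          simp
        · rw [dif_neg hx'y]
    have hmain := hcbe u hu0 hum g
    rw [lnorm_eq_cnorm hlw u (n := N + 1) (by push_cast; omega)] at hmain
    have h3 : ε * ((P - q * w u) / ((N.choose (fc u) : ℝ) * w u)) ≤
        (∑ y ∈ (up (N + 1) u).filter (fun y => Bad N w t (supp f) y), w y) /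
          ((N.choose (fc u) : ℝ) * w u) := by
      refine (mul_le_mul_of_nonneg_left hinf hε.le).trans (hmain.trans ?_)
      have hnn : 0 ≤ ∑ y ∈ (up (N + 1) u).filter (fun y => Bad N w t (supp f) y), w y :=
        Finset.sum_nonneg fun x _ => (hW.pos x).le
      exact div_le_div₀ hnn hb (by positivity) (mul_le_mul_of_nonneg_right hCC hwu.le)
    rw [← mul_div_assoc] at h3
    exact (div_le_div_iff_of_pos_right (by positivity)).1 h3
  funext x
  by_contra hx
  have : x.1 ∈ supp f := mem_supp.2 ⟨x.2, hx⟩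
  rw [key] at this
  simp at this

lemma sdim_mono ⦃x y : SC Kc⦄ (h : x < y) : sdim x < sdim y := by
  rw [sdim_eq, sdim_eq]
  have h1 := fc_mono h.le
  have h2 : fc x ≠ fc y := fun e => h.ne (eq_of_le_fc h.le e.ge)
  omega

/-- First claim. -/
lemma claim_one (hdown : ∀ s ∈ Kc, ∀ t, t ⊆ s → t ∈ Kc) (hempty : ∅ ∈ Kc) {N : ℕ}
    (hW : Wt N w)
    (hlw : ∀ u x : SC Kc, u ≤ x → linkWeight sdim d w u x =
      w x / (((fc x).choose (fc u) : ℝ) * w u))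
    (hN : 0 < N) {m i : ℤ} (hm : m = (N : ℤ) - 1) (hi : i = m - 1)
    (ho : IsOrientation R (sdim (Kc := Kc)) sgn) (hres : IsSheafRes R F res)
    {K ε t : ℝ} (hK : 0 < K) (hε : 0 < ε)
    (ht : t = K * ε) (ht1 : t ≤ 1) (hS : SkelHyp N w t)
    (hKN : 2 * (4 ^ (N + 1) * (N * ((N : ℝ) + 1) ^ 2)) * K < 1)
    (hcbe : ∀ u : SC Kc, 0 ≤ sdim u → sdim u ≤ m → LinkCbeGe sdim F sgn res w d u m ε)
    (f : Cochain (sdim (Kc := Kc)) F i) :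
    (1 / (2 ^ N * (2 * N)) : ℝ) * t ^ (2 ^ N - 1) *
      sInf ((fun g => cnorm sdim F w (f - g)) '' {f | coboundary sdim F sgn res i m f = 0}) ≤
      cnorm sdim F w (coboundary sdim F sgn res i m f) := by
  subst hi
  have htp : 0 < t := by rw [ht]; positivity
  have hNr : (1 : ℝ) ≤ N := by exact_mod_cast hN
  have h2N : (1 : ℝ) ≤ 2 ^ N := one_le_pow₀ (by norm_num)
  have hbdd : BddBelow ((fun g => cnorm sdim F w (f - g)) ''
      {f | coboundary sdim F sgn res (m - 1) m f = 0}) := by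
    refine ⟨0, ?_⟩
    rintro _ ⟨g, _, rfl⟩
    exact cnorm_nonneg hW.pos _
  have h0 : coboundary sdim F sgn res (m - 1) m (0 : Cochain (sdim (Kc := Kc)) F (m - 1)) = 0 := by
    funext y
    simp only [coboundary]
    refine Finset.sum_eq_zero fun x _ => ?_
    split_ifs <;> simp
  have hnorm1 : ∀ g : Cochain (sdim (Kc := Kc)) F (m - 1), cnorm sdim F w g ≤ 1 := by
    intro g
    have e0 : fc (⟨∅, hempty⟩ : SC Kc) = 0 := Finset.card_empty
    have h1 := hW.sum ⟨∅, hempty⟩ (N - 1) (by omega) (by omega)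
    rw [e0, hW.bot _ e0] at h1
    simp only [Nat.choose_zero_right, Nat.cast_one, mul_one] at h1
    rw [← h1, cnorm_eq]
    refine Finset.sum_le_sum_of_subset_of_nonneg ?_ fun x _ _ => (hW.pos x).le
    intro x hx
    obtain ⟨h, _⟩ := mem_supp.1 hx
    rw [sdim_eq] at h
    rw [mem_up]
    exact ⟨by omega, Finset.empty_subset _⟩
  have hc1 : (1 / (2 ^ N * (2 * N)) : ℝ) ≤ 1 := by
    rw [div_le_one (by positivity)]
    nlinarith
  have hc0 : (0 : ℝ) < 1 / (2 ^ N * (2 * N)) := by positivity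
  have htpow : 0 < t ^ (2 ^ N - 1) := by positivity
  have hdist1 : sInf ((fun g => cnorm sdim F w (f - g)) ''
      {f | coboundary sdim F sgn res (m - 1) m f = 0}) ≤ 1 :=
    (csInf_le hbdd ⟨0, h0, rfl⟩).trans (hnorm1 _)
  by_cases hbig : t ^ (2 ^ N - 1) ≤ cnorm sdim F w (coboundary sdim F sgn res (m - 1) m f)
  · refine le_trans ?_ hbig
    have h1 : (1 / (2 ^ N * (2 * N)) : ℝ) * t ^ (2 ^ N - 1) ≤ t ^ (2 ^ N - 1) := by
      nlinarith
    have h2 := mul_le_mul_of_nonneg_left hdist1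
      (show 0 ≤ (1 / (2 ^ N * (2 * N)) : ℝ) * t ^ (2 ^ N - 1) by positivity)
    linarith
  push Not at hbig
  -- choose a correction minimizing a combined norm
  set q : ℝ := t ^ (2 ^ (N - 1)) / (2 * N) with hqdef
  have hq0 : 0 < q := by positivity
  set c : ℝ := q / 2 ^ N with hcdef
  have hcpos : 0 < c := by positivity
  obtain ⟨h, hh⟩ := exists_min_of_cnorm (w := w) 1 c
    (fun h : Cochain (sdim (Kc := Kc)) F (m - 1) => coboundary sdim F sgn res (m - 1) m (f + h))
    (fun h => h)
  simp only [one_mul] at hh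
  have hz := hh 0
  have hzz : cnorm sdim F w (0 : Cochain (sdim (Kc := Kc)) F (m - 1)) = 0 := by simp [cnorm]
  rw [add_zero, hzz, mul_zero, add_zero] at hz
  have hcn := cnorm_nonneg hW.pos h
  have hgz : coboundary sdim F sgn res (m - 1) m (f + h) = 0 := by
    refine small_cocycle_zero (q := q) hdown hW hlw hN hm hK hε ht ht1 hS hKN hq0.le ?_ hcbe _
      ?_ ?_ ?_
    · rw [hqdef]; apply le_of_eq; field_simp
    · have : 0 ≤ c * cnorm sdim F w h := by positivity
      linarith
    · exact coboundary_coboundary sdim_mono ho hres (by omega) rfl _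
    · intro u hu0 hum b
      have h1 := hh (h + extendByZero sdim F u b)
      rw [← add_assoc, coboundary_add _ _ (f + h), coboundary_extend] at h1
      have h2 := cnorm_add_le hW.pos h (extendByZero sdim F u b)
      have h3 : cnorm sdim F w (extendByZero sdim F u b) ≤ 2 ^ N * w u := by
        by_cases hle : fc u ≤ N - 1
        · have h4 := hW.sum u (N - 1) hle (by omega)
          have h5 : cnorm sdim F w (extendByZero sdim F u b) ≤ ∑ x ∈ up (N - 1) u, w x := by
            rw [cnorm_eq]
            refine Finset.sum_le_sum_of_subset_of_nonneg ?_ fun x _ _ => (hW.pos x).le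
            intro x hx
            obtain ⟨hx1, hx2⟩ := supp_extend hx
            rw [sdim_eq] at hx1
            rw [mem_up]
            exact ⟨by omega, hx2⟩
          rw [h4] at h5
          refine h5.trans (mul_le_mul_of_nonneg_right ?_ (hW.pos u).le)
          have h6 : (N - 1).choose (fc u) ≤ 2 ^ N :=
            (Nat.choose_le_two_pow _ _).trans (Nat.pow_le_pow_right (by norm_num) (by omega))
          exact_mod_cast h6
        · have : supp (extendByZero sdim F u b) = ∅ := by
            apply Finset.eq_empty_of_forall_notMem
            intro x hx
            obtain ⟨hx1, hx2⟩ := supp_extend hx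
            have := fc_mono hx2
            rw [sdim_eq] at hx1
            omega
          rw [cnorm_eq, this, Finset.sum_empty]
          have := hW.pos u
          positivity
      have h7 : c * cnorm sdim F w (extendByZero sdim F u b) ≤ q * w u := by
        have := mul_le_mul_of_nonneg_left h3 hcpos.le
        refine this.trans (le_of_eq ?_)
        rw [hcdef]; field_simp
      have h8 := mul_le_mul_of_nonneg_left h2 hcpos.le
      linarith
  have hd : sInf ((fun g => cnorm sdim F w (f - g)) ''
      {f | coboundary sdim F sgn res (m - 1) m f = 0}) ≤ cnorm sdim F w h := by
    refine csInf_le hbdd ⟨f + h, hgz, ?_⟩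
    simp only
    rw [← cnorm_neg h]
    congr 1
    abel
  have hcle : (1 / (2 ^ N * (2 * N)) : ℝ) * t ^ (2 ^ N - 1) ≤ c := by
    have h1 : t ^ (2 ^ N - 1) ≤ t ^ (2 ^ (N - 1)) := by
      refine pow_le_pow_of_le_one htp.le ht1 ?_
      obtain ⟨n, rfl⟩ : ∃ n, N = n + 1 := ⟨N - 1, by omega⟩
      have : 0 < 2 ^ n := by positivity
      rw [Nat.add_sub_cancel, pow_succ]
      omega
    have h2 : c = (1 / (2 ^ N * (2 * N)) : ℝ) * t ^ (2 ^ (N - 1)) := by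
      rw [hcdef, hqdef]; field_simp
    rw [h2]
    exact mul_le_mul_of_nonneg_left h1 hc0.le
  have hg0 := cnorm_nonneg hW.pos (coboundary sdim F sgn res (m - 1) m (f + h))
  calc _ ≤ (1 / (2 ^ N * (2 * N)) : ℝ) * t ^ (2 ^ N - 1) * cnorm sdim F w h :=
        mul_le_mul_of_nonneg_left hd (by positivity)
    _ ≤ c * cnorm sdim F w h := mul_le_mul_of_nonneg_right hcle hcn
    _ ≤ _ := by linarith

/-- Second claim. -/
lemma claim_two (hdown : ∀ s ∈ Kc, ∀ t, t ⊆ s → t ∈ Kc) {N : ℕ}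
    (hW : Wt N w)
    (hlw : ∀ u x : SC Kc, u ≤ x → linkWeight sdim d w u x =
      w x / (((fc x).choose (fc u) : ℝ) * w u))
    (hN : 0 < N) {m : ℤ} (hm : m = (N : ℤ) - 1)
    (ho : IsOrientation R (sdim (Kc := Kc)) sgn) (hres : IsSheafRes R F res)
    {K ε t : ℝ} (hK : 0 < K) (hε : 0 < ε)
    (ht : t = K * ε) (ht1 : t ≤ 1) (hS : SkelHyp N w t)
    (hKN : 2 * (4 ^ (N + 1) * (N * ((N : ℝ) + 1) ^ 2)) * K < 1)
    (hcbe : ∀ u : SC Kc, 0 ≤ sdim u → sdim u ≤ m → LinkCbeGe sdim F sgn res w d u m ε)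
    (f : Cochain (sdim (Kc := Kc)) F m)
    (hf : f ∈ cocycles (sdim (Kc := Kc)) F sgn res m)
    (hfb : f ∉ coboundariesSet (sdim (Kc := Kc)) F sgn res m) :
    t ^ (2 ^ N - 1) ≤ cnorm sdim F w f := by
  by_contra hsmall
  push Not at hsmall
  have htp : 0 < t := by rw [ht]; positivity
  obtain ⟨h, hh⟩ := exists_min_of_cnorm (w := w) 1 0
    (fun h : Cochain (sdim (Kc := Kc)) F (m - 1) => f + coboundary sdim F sgn res (m - 1) m h)
    (fun h => h)
  simp only [one_mul, zero_mul, add_zero] at hh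
  have hneg : ∀ h : Cochain (sdim (Kc := Kc)) F (m - 1),
      coboundary sdim F sgn res (m - 1) m (-h) = - coboundary sdim F sgn res (m - 1) m h := by
    intro h
    have h1 := coboundary_add (sgn := sgn) (res := res) (m - 1) m (-h) h
    have h2 := coboundary_add (sgn := sgn) (res := res) (m - 1) m
      (0 : Cochain (sdim (Kc := Kc)) F (m - 1)) 0
    rw [add_zero] at h2
    rw [neg_add_cancel, left_eq_add.1 h2] at h1
    exact eq_neg_of_add_eq_zero_left h1.symm
  have hz : cnorm sdim F w (f + coboundary sdim F sgn res (m - 1) m h) ≤ cnorm sdim F w f := by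
    have h1 := hh (h + -h)
    rw [coboundary_add, hneg, add_neg_cancel, add_zero] at h1
    exact h1
  have hgz : f + coboundary sdim F sgn res (m - 1) m h = 0 := by
    refine small_cocycle_zero (q := 0) hdown hW hlw hN hm hK hε ht ht1 hS hKN le_rfl ?_ hcbe _
      (hz.trans_lt hsmall) ?_ ?_
    · rw [mul_zero]; positivity
    · rw [coboundary_add, coboundary_coboundary sdim_mono ho hres (by omega) rfl, add_zero]
      exact hf
    · intro u hu0 hum b
      have h1 := hh (h + extendByZero sdim F u b)
      rw [coboundary_add, coboundary_extend, ← add_assoc] at h1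
      linarith
  apply hfb
  refine ⟨-h, ?_⟩
  rw [hneg]
  exact (eq_neg_of_add_eq_zero_left hgz).symm

theorem mem_filter_any {α : Type*} {p : α → Prop} {inst : DecidablePred p} {s : Finset α} {x : α} :
    x ∈ @Finset.filter α p inst s ↔ x ∈ s ∧ p x := Finset.mem_filter

theorem mem_of_mem_filter_any {α : Type*} {p : α → Prop} {inst : DecidablePred p} {s : Finset α}
    {x : α} (h : x ∈ @Finset.filter α p inst s) : x ∈ s := (mem_filter_any.1 h).1


/-- Translation of the skeleton expansion hypothesis. -/
lemma skelHyp_of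
    (hlw : ∀ u x : SC Kc, u ≤ x → linkWeight sdim d w u x =
      w x / (((fc x).choose (fc u) : ℝ) * w u)) (hw : ∀ x, 0 < w x)
    {N : ℕ} {t : ℝ} (ht0 : 0 ≤ t) (ht1 : t ≤ 1) {k : ℕ} (hk : N ≤ k + 2)
    (h : ∀ u : SC Kc, -1 ≤ sdim u → sdim u ≤ (k : ℤ) →
          LinkUgrSkeletonExpander (sdim (Kc := Kc)) d w u (t ^ 2 ^ ((k : ℤ) - sdim u).toNat) 1) :
    SkelHyp N w t := by
  intro j z hz S hS
  have h1 := h z (by rw [sdim_eq]; omega) (by rw [sdim_eq]; omega) S (by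
    rw [facesAbove_eq (n := fc z + 1) (by rw [sdim_eq]; push_cast; ring)]; exact hS)
  have e : facesAbove sdim (sdim z + 2) z = up (fc z + 2) z :=
    facesAbove_eq (by rw [sdim_eq]; push_cast; ring) z
  rw [e] at h1
  unfold wsum at h1
  have e1 : ∑ x ∈ S, linkWeight sdim d w z x = ∑ x ∈ S, w x / (((fc z : ℝ) + 1) * w z) := by
    refine Finset.sum_congr rfl fun x hx => ?_
    have := mem_up.1 (hS hx)
    rw [hlw z x this.2, this.1, Nat.choose_succ_self_right]
    push_cast
    rfl
  rw [e1, one_mul] at h1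
  have hnn : 0 ≤ ∑ x ∈ S, w x / (((fc z : ℝ) + 1) * w z) :=
    Finset.sum_nonneg fun x _ => by have := hw x; have := hw z; positivity
  have hp : t ^ 2 ^ ((k : ℤ) - sdim z).toNat ≤ t ^ 2 ^ j := by
    refine pow_le_pow_of_le_one ht0 ht1 (Nat.pow_le_pow_right (by norm_num) ?_)
    rw [sdim_eq]; omega
  have h2 := mul_le_mul_of_nonneg_right hp hnn
  refine le_trans (le_of_eq ?_) (h1.trans (by linarith))
  refine Finset.sum_congr ?_ fun x hx => ?_
  · ext e
    rw [mem_filter_any, mem_filter_any]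
  · have := mem_up.1 (mem_of_mem_filter_any hx)
    rw [hlw z x this.2, this.1]

end Main

end FK

open FK in
/-- criterion for cosystolic expansion of sheaves on simplicial complexes. -/
theorem statement0 (k : ℕ) :
    ∃ K K' : ℝ, (0 < K ∧ K ≤ 1) ∧ (0 < K' ∧ K' ≤ 1) ∧
      ∀ (ι : Type) (Kc : Finset (Finset ι)),
        ∅ ∈ Kc →
        (∀ s ∈ Kc, ∀ t, t ⊆ s → t ∈ Kc) →
        ∀ d : ℤ, (k : ℤ) + 2 ≤ d →
        (∀ s ∈ Kc, ∃ t ∈ Kc, s ⊆ t ∧ (t.card : ℤ) - 1 = d) →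
        ∀ w : SC Kc → ℝ, IsProperWeight (sdim (Kc := Kc)) d w →
        ∀ (R : Type) (_ : CommRing R) (sgn : SC Kc → SC Kc → R),
          IsOrientation R (sdim (Kc := Kc)) sgn →
        ∀ (F : SC Kc → Type) (_ : ∀ x, AddCommGroup (F x)) (_ : ∀ x, Module R (F x))
          (res : ∀ x y : SC Kc, x ≤ y → (F x →ₗ[R] F y)),
          IsSheafRes R F res →
        ∀ ε : ℝ, 0 < ε → ε ≤ 1 →
        -- (1a)
        (∀ u : SC Kc, 0 ≤ sdim u → sdim u ≤ (k : ℤ) →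
          LinkCbeGe (sdim (Kc := Kc)) F sgn res w d u (k : ℤ) ε) →
        -- (1b)
        (∀ u : SC Kc, 0 ≤ sdim u → sdim u ≤ (k : ℤ) + 1 →
          LinkCbeGe (sdim (Kc := Kc)) F sgn res w d u ((k : ℤ) + 1) ε) →
        -- (2)
        (∀ u : SC Kc, -1 ≤ sdim u → sdim u ≤ (k : ℤ) →
          LinkUgrSkeletonExpander (sdim (Kc := Kc)) d w u
            ((K * ε) ^ 2 ^ ((k : ℤ) - sdim u).toNat) 1) →
        (∀ f : Cochain (sdim (Kc := Kc)) F (k : ℤ),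
            K' * (K * ε) ^ (2 ^ (k + 2) - 1) *
                distTo (sdim (Kc := Kc)) F w f (cocycles (sdim (Kc := Kc)) F sgn res (k : ℤ)) ≤
              cnorm (sdim (Kc := Kc)) F w
                (coboundary (sdim (Kc := Kc)) F sgn res (k : ℤ) ((k : ℤ) + 1) f)) ∧
        (∀ f : Cochain (sdim (Kc := Kc)) F (k : ℤ),
            f ∈ cocycles (sdim (Kc := Kc)) F sgn res (k : ℤ) →
            f ∉ coboundariesSet (sdim (Kc := Kc)) F sgn res (k : ℤ) →
            K' * (K * ε) ^ (2 ^ (k + 1) - 1) ≤ cnorm (sdim (Kc := Kc)) F w f) := by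
  refine ⟨1 / (4 ^ (k + 4) * ((k : ℝ) + 3) ^ 3), 1 / (2 ^ (k + 2) * (2 * ((k : ℝ) + 2))),
    ⟨by positivity, ?_⟩, ⟨by positivity, ?_⟩, ?_⟩
  · rw [div_le_one (by positivity)]
    have h1 : (1 : ℝ) ≤ 4 ^ (k + 4) := one_le_pow₀ (by norm_num)
    have h2 : (1 : ℝ) ≤ ((k : ℝ) + 3) ^ 3 := one_le_pow₀ (by linarith [Nat.cast_nonneg (α := ℝ) k])
    nlinarith
  · rw [div_le_one (by positivity)]
    have h1 : (1 : ℝ) ≤ 2 ^ (k + 2) := one_le_pow₀ (by norm_num)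
    have h2 := Nat.cast_nonneg (α := ℝ) k
    nlinarith
  set K : ℝ := 1 / (4 ^ (k + 4) * ((k : ℝ) + 3) ^ 3) with hKdef
  have hK : 0 < K := by positivity
  have hK1 : K ≤ 1 := by
    rw [hKdef, div_le_one (by positivity)]
    have h1 : (1 : ℝ) ≤ 4 ^ (k + 4) := one_le_pow₀ (by norm_num)
    have h2 : (1 : ℝ) ≤ ((k : ℝ) + 3) ^ 3 := one_le_pow₀ (by linarith [Nat.cast_nonneg (α := ℝ) k])
    nlinarith
  have hKN : ∀ N : ℕ, N ≤ k + 2 → 2 * (4 ^ (N + 1) * (N * ((N : ℝ) + 1) ^ 2)) * K < 1 := by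
    intro N hN
    have hNr : (N : ℝ) ≤ (k : ℝ) + 2 := by exact_mod_cast hN
    have h1 : (4 : ℝ) ^ (N + 1) ≤ 4 ^ (k + 3) := pow_le_pow_right₀ (by norm_num) (by omega)
    have h2 : (N : ℝ) * ((N : ℝ) + 1) ^ 2 ≤ ((k : ℝ) + 3) * ((k : ℝ) + 3) ^ 2 := by
      have a1 : (N : ℝ) ≤ (k : ℝ) + 3 := by linarith
      have a2 : (N : ℝ) + 1 ≤ (k : ℝ) + 3 := by linarith
      exact mul_le_mul a1 (pow_le_pow_left₀ (by positivity) a2 2) (by positivity) (by positivity)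
    have h3 : (4 : ℝ) ^ (N + 1) * (N * ((N : ℝ) + 1) ^ 2) ≤
        4 ^ (k + 3) * (((k : ℝ) + 3) * ((k : ℝ) + 3) ^ 2) := by
      gcongr
    have h4 : 2 * ((4 : ℝ) ^ (k + 3) * (((k : ℝ) + 3) * ((k : ℝ) + 3) ^ 2)) * K = 1 / 2 := by
      rw [hKdef, pow_succ 4 (k + 3)]
      field_simp
      norm_num
    have h5 := mul_le_mul_of_nonneg_right h3 hK.le
    linarith
  intro ι Kc hempty hdown d hd hpure w hw R _ sgn ho F _ _ res hres ε hε hε1 h1a h1b h2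
  have hD : d = ((d.toNat + 1 : ℕ) : ℤ) - 1 := by push_cast; omega
  have hlw : ∀ u x : SC Kc, u ≤ x → linkWeight sdim d w u x =
      w x / (((fc x).choose (fc u) : ℝ) * w u) :=
    fun u x h => linkWeight_eq hempty hdown hD hpure hw h
  have hWt : ∀ N : ℕ, N ≤ k + 2 → Wt N w := by
    intro N hN
    refine ⟨hw.pos, fun z n h1 h2 => sum_up hempty hdown hD hw z h1 (by omega), fun z hz => ?_⟩
    have : z = ⟨∅, hempty⟩ := Subtype.ext (Finset.card_eq_zero.1 hz)
    rw [this]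
    exact w_bot hempty hdown hD hw
  have ht0 : 0 ≤ K * ε := by positivity
  have ht1 : K * ε ≤ 1 := mul_le_one₀ hK1 hε.le hε1
  have hS : ∀ N : ℕ, N ≤ k + 2 → SkelHyp N w (K * ε) := fun N hN =>
    skelHyp_of hlw hw.pos ht0 ht1 hN h2
  refine ⟨fun f => ?_, fun f hf hfb => ?_⟩
  · have h := claim_one (N := k + 2) (m := (k : ℤ) + 1) (i := (k : ℤ)) hdown hempty (hWt _ le_rfl)
      hlw (by omega) (by push_cast; ring) (by ring) ho hres hK hε rfl ht1 (hS _ le_rfl)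
      (hKN _ le_rfl) h1b f
    push_cast at h
    exact h
  · have h := claim_two (N := k + 1) (m := (k : ℤ)) hdown (hWt _ (by omega)) hlw (by omega)
      (by push_cast; ring) ho hres hK hε rfl ht1 (hS _ (by omega)) (hKN _ (by omega)) h1a f hf hfb
    refine le_trans ?_ h
    refine mul_le_of_le_one_left (by positivity) ?_
    rw [div_le_one (by positivity)]
    have h1 : (1 : ℝ) ≤ 2 ^ (k + 2) := one_le_pow₀ (by norm_num)
    have h2 := Nat.cast_nonneg (α := ℝ) k
    nlinarith
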